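/- arXiv:1412.3681 — 3 statements merged into one kernel-verified Lean document; each statement's English description precedes it below -/
import Mathlib

section
/- Let G be a countable set, (Ω, ℬ, ℙ) a probability space, and V : Ω → (G → ℝ) a jointly measurable, uniformly bounded random potential (|V(x;ω)| ≤ C for all x, ω). For Λ ⊆ G let ℬ_{Λᶜ} denote the sub-σ-algebra generated by the random variables {V(y)}_{y∈G∖Λ}. Assume: (1) the random potential has the K-property, i.e. every random variable that is measurable with respect to ℬ_{Λᶜ} for every finite Λ ⊂ G is ℙ-almost surely constant; (2) for each x ∈ G, the regular conditional distribution of V(x) given the remaining variables (V(y))_{y≠x} is ℙ-almost surely atomless. Let A be a bounded self-adjoint operator on ℓ²(G), H(ω) = A + V(ω) (with V(ω) acting as multiplication), and γ_x(E;ω) := lim_{η↓0} ‖(H(ω) − (E+iη))⁻¹ δ_x‖², a limit which exists in (0, ∞] by monotonicity. Then for every x ∈ G and Lebesgue-almost every E ∈ ℝ, the probability ℙ(γ_x(E) < ∞) equals either 0 or 1. -/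
open MeasureTheory ProbabilityTheory Filter Topology
open scoped ENNReal

namespace ZeroOne

/-- all one-site sections are finite or cofinite -/
def FC {G : Type*} [DecidableEq G] (S : Set (G → ℝ)) : Prop :=
  ∀ (w : G → ℝ) (y : G), {v : ℝ | Function.update w y v ∈ S}.Finite ∨
    {v : ℝ | Function.update w y v ∈ S}ᶜ.Finite

/-- erase the dependence on site `y` -/
def er {G : Type*} [DecidableEq G] (S : Set (G → ℝ)) (y : G) : Set (G → ℝ) :=
  {w | {v : ℝ | Function.update w y v ∈ S}ᶜ.Finite}

lemma not_fin {s : Set ℝ} (h : s.Finite) (h' : sᶜ.Finite) : False := by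
  have := h.union h'
  rw [Set.union_compl_self] at this
  exact Set.infinite_univ this

lemma er_update_self {G : Type*} [DecidableEq G] (S : Set (G → ℝ)) (y : G) (w : G → ℝ) (v : ℝ) :
    Function.update w y v ∈ er S y ↔ w ∈ er S y := by
  simp [er]

lemma er_update_of {G : Type*} [DecidableEq G] (S : Set (G → ℝ)) (y z : G)
    (h : ∀ w v, Function.update w z v ∈ S ↔ w ∈ S) (w : G → ℝ) (v : ℝ) :
    Function.update w z v ∈ er S y ↔ w ∈ er S y := by
  by_cases hyz : z = y
  · subst hyz; exact er_update_self S z w v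
  · simp only [er, Set.mem_ofPred_eq]
    have : ∀ t, Function.update (Function.update w z v) y t
        = Function.update (Function.update w y t) z v := fun t =>
      Function.update_comm hyz v t w
    simp only [this, h]

lemma FC_er {G : Type*} [DecidableEq G] {S : Set (G → ℝ)} (hS : FC S) (y : G) : FC (er S y) := by
  intro w z
  by_cases hyz : z = y
  · subst hyz
    simp only [er_update_self]
    by_cases h : w ∈ er S z
    · right; simp [h]
    · left; simp [h]
  by_contra hcon
  rw [not_or] at hcon
  obtain ⟨hF, hN⟩ := hcon
  set F : Set ℝ := {v : ℝ | Function.update w z v ∈ er S y} with hFdef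
  have hF' : F.Infinite := hF
  have hN' : Fᶜ.Infinite := hN
  let f := hF'.natEmbedding
  let g := hN'.natEmbedding
  have h1 : ∀ n, {v : ℝ | Function.update (Function.update w z (f n)) y v ∈ S}ᶜ.Finite :=
    fun n => (f n).2
  have h2 : ∀ n, {v : ℝ | Function.update (Function.update w z (g n)) y v ∈ S}.Finite := by
    intro n
    rcases hS (Function.update w z (g n)) y with h | h
    · exact h
    · exact absurd h (g n).2
  have hc : ((⋃ n, {v : ℝ | Function.update (Function.update w z (f n)) y v ∈ S}ᶜ) ∪
      (⋃ n, {v : ℝ | Function.update (Function.update w z (g n)) y v ∈ S})).Countable :=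
    (Set.countable_iUnion fun n => (h1 n).countable).union
      (Set.countable_iUnion fun n => (h2 n).countable)
  have hne : ∃ a, a ∉ ((⋃ n, {v : ℝ | Function.update (Function.update w z (f n)) y v ∈ S}ᶜ) ∪
      (⋃ n, {v : ℝ | Function.update (Function.update w z (g n)) y v ∈ S})) := by
    by_contra h
    push Not at h
    exact Set.not_countable_univ (α := ℝ) (hc.mono fun a _ => h a)
  obtain ⟨a, ha⟩ := hne
  simp only [Set.mem_union, Set.mem_iUnion, Set.mem_compl_iff, Set.mem_ofPred_eq, not_or,
    not_exists, not_not] at ha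
  obtain ⟨ha1, ha2⟩ := ha
  have hcm : ∀ t, Function.update (Function.update w z t) y a
        = Function.update (Function.update w y a) z t := fun t =>
      Function.update_comm hyz t a w
  simp only [hcm] at ha1 ha2
  rcases hS (Function.update w y a) z with h | h
  · refine (Set.infinite_range_of_injective
      (f := fun n => (f n : ℝ)) ?_) (h.subset ?_)
    · exact Subtype.val_injective.comp f.injective
    · rintro _ ⟨n, rfl⟩; exact ha1 n
  · refine (Set.infinite_range_of_injective
      (f := fun n => (g n : ℝ)) ?_) (h.subset ?_)
    · exact Subtype.val_injective.comp g.injective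
    · rintro _ ⟨n, rfl⟩; exact ha2 n

lemma measurable_upd {G : Type*} [DecidableEq G] (y : G) :
    Measurable (fun p : (G → ℝ) × ℝ => Function.update p.1 y p.2) := by
  rw [measurable_pi_iff]
  intro u
  by_cases h : u = y
  · subst h; simpa using measurable_snd
  · simp only [Function.update_of_ne h]
    exact (measurable_pi_apply u).comp measurable_fst

lemma measurableSet_er {G : Type*} [DecidableEq G] {S : Set (G → ℝ)} (hS : FC S)
    (hm : MeasurableSet S) (y : G) : MeasurableSet (er S y) := by
  have hm2 := (measurable_upd y) hm
  have := measurable_measure_prodMk_left (ν := (volume : Measure ℝ)) hm2.compl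
  have h2 : er S y = {w | volume (Prod.mk w ⁻¹'
      ((fun p : (G → ℝ) × ℝ => Function.update p.1 y p.2) ⁻¹' S)ᶜ) = 0} := by
    ext w
    constructor
    · intro h
      exact Set.Finite.measure_zero h _
    · intro h
      rcases hS w y with h' | h'
      · exfalso
        have h3 := Set.Finite.measure_zero h' (volume : Measure ℝ)
        have h4 : volume ({v : ℝ | Function.update w y v ∈ S} ∪
          {v : ℝ | Function.update w y v ∈ S}ᶜ) = 0 := measure_union_null h3 h
        rw [Set.union_compl_self] at h4
        simp at h4
      · exact h'
  rw [h2]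
  exact this (measurableSet_singleton 0)

/-- glue -/
def glue {G : Type*} [DecidableEq G] (y : G) (p : ({u : G // u ≠ y} → ℝ) × ℝ) : G → ℝ :=
  fun u => if h : u = y then p.2 else p.1 ⟨u, h⟩

lemma measurable_glue {G : Type*} [DecidableEq G] (y : G) : Measurable (glue y) := by
  rw [measurable_pi_iff]
  intro u
  by_cases h : u = y
  · simp only [glue, h, dite_true]; exact measurable_snd
  · simp only [glue, h, dite_false]
    exact (measurable_pi_apply _).comp measurable_fst

lemma ae_er {G : Type*} [Countable G] [DecidableEq G]
    {Ω : Type*} [MeasurableSpace Ω] (μ : Measure Ω) [IsProbabilityMeasure μ]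
    (V : Ω → G → ℝ) (hVmeas : Measurable V) (y : G)
    (hat : ∀ᵐ b ∂(μ.map (fun ω (u : {u : G // u ≠ y}) => V ω (u : G))),
        ∀ t : ℝ,
          condDistrib (fun ω => V ω y) (fun ω (u : {u : G // u ≠ y}) => V ω (u : G)) μ b {t} = 0)
    {S : Set (G → ℝ)} (hS : FC S) (hm : MeasurableSet S) :
    ∀ᵐ ω ∂μ, (V ω ∈ S ↔ V ω ∈ er S y) := by
  have hX : Measurable (fun ω (u : {u : G // u ≠ y}) => V ω (u : G)) := by
    rw [measurable_pi_iff]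
    intro u
    exact (measurable_pi_apply (u : G)).comp hVmeas
  have hY : Measurable (fun ω => V ω y) := (measurable_pi_apply y).comp hVmeas
  have hme := measurableSet_er hS hm y
  have hgl : ∀ ω, glue y ((fun (u : {u : G // u ≠ y}) => V ω (u : G)), V ω y) = V ω := by
    intro ω
    ext u
    by_cases h : u = y
    · subst h; simp [glue]
    · simp [glue, h]
  have hMS : MeasurableSet {p | glue y p ∈ S ↔ glue y p ∈ er S y} := by
    have h1 := measurable_glue y hm
    have h2 := measurable_glue y hme
    have : {p | glue y p ∈ S ↔ glue y p ∈ er S y} =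
      ((glue y ⁻¹' S) ∩ (glue y ⁻¹' er S y)) ∪ ((glue y ⁻¹' S)ᶜ ∩ (glue y ⁻¹' er S y)ᶜ) := by
      ext p
      simp only [Set.mem_ofPred_eq, Set.mem_union, Set.mem_inter_iff, Set.mem_preimage,
        Set.mem_compl_iff]
      tauto
    rw [this]
    exact (h1.inter h2).union (h1.compl.inter h2.compl)
  have key : ∀ᵐ p ∂(μ.map (fun ω => ((fun (u : {u : G // u ≠ y}) => V ω (u : G)), V ω y))),
      (glue y p ∈ S ↔ glue y p ∈ er S y) := by
    rw [← compProd_map_condDistrib (μ := μ)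
      (X := fun ω (u : {u : G // u ≠ y}) => V ω (u : G)) (Y := fun ω => V ω y)
      hY.aemeasurable]
    rw [Measure.ae_compProd_iff hMS]
    filter_upwards [hat] with b hb
    have hu : ∀ t, glue y (b, t) = Function.update (glue y (b, 0)) y t := by
      intro t
      ext u
      by_cases h : u = y
      · subst h; simp [glue]
      · simp [glue, h]
    have hfin : ∀ s : Set ℝ, s.Finite →
        condDistrib (fun ω => V ω y) (fun ω (u : {u : G // u ≠ y}) => V ω (u : G)) μ b s = 0 := by
      intro s hs
      have : s = ⋃ t ∈ s, {t} := by simp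
      rw [this]
      exact (measure_biUnion_null_iff hs.countable).2 fun t _ => hb t
    rw [ae_iff]
    by_cases h : glue y (b, 0) ∈ er S y
    · refine measure_mono_null ?_ (hfin _ h)
      intro t ht
      simp only [Set.mem_ofPred_eq] at ht
      rw [hu t, er_update_self] at ht
      simp only [Set.mem_compl_iff, Set.mem_ofPred_eq]
      tauto
    · refine measure_mono_null ?_ (hfin _ ((hS _ y).resolve_right h))
      intro t ht
      simp only [Set.mem_ofPred_eq] at ht
      rw [hu t, er_update_self] at ht
      simp only [Set.mem_ofPred_eq]
      tauto
  have := ae_of_ae_map (hX.prodMk hY).aemeasurable key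
  filter_upwards [this] with ω hω
  rwa [hgl ω] at hω

/-- successive erasure -/
def seqS {G : Type*} [DecidableEq G] (S : Set (G → ℝ)) (g : ℕ → G) : ℕ → Set (G → ℝ)
  | 0 => S
  | n + 1 => er (seqS S g n) (g n)

lemma zero_one {G : Type*} [Countable G] [Nonempty G] [DecidableEq G]
    {Ω : Type*} [MeasurableSpace Ω] (μ : Measure Ω) [IsProbabilityMeasure μ]
    (V : Ω → G → ℝ) (hVmeas : Measurable V)
    (B : Set G → MeasurableSpace Ω)
    (hB : ∀ Λ : Set G, B Λ =
      ⨆ y ∈ Λᶜ, MeasurableSpace.comap (fun ω => V ω y) inferInstance)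
    (hK : ∀ f : Ω → ℝ, (∀ Λ : Finset G, Measurable[B ↑Λ] f) →
      ∃ cst : ℝ, ∀ᵐ ω ∂μ, f ω = cst)
    (hat : ∀ y : G, ∀ᵐ b ∂(μ.map (fun ω (u : {u : G // u ≠ y}) => V ω (u : G))),
        ∀ t : ℝ,
          condDistrib (fun ω => V ω y) (fun ω (u : {u : G // u ≠ y}) => V ω (u : G)) μ b {t} = 0)
    {S : Set (G → ℝ)} (hS : FC S) (hm : MeasurableSet S) :
    μ {ω | V ω ∈ S} = 0 ∨ μ {ω | V ω ∈ S} = 1 := by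
  classical
  obtain ⟨g, hg⟩ := exists_surjective_nat G
  have hall : ∀ n, FC (seqS S g n) ∧ MeasurableSet (seqS S g n) := by
    intro n
    induction n with
    | zero => exact ⟨hS, hm⟩
    | succ n ih => exact ⟨FC_er ih.1 _, measurableSet_er ih.1 ih.2 _⟩
  have hae : ∀ n, ∀ᵐ ω ∂μ, (V ω ∈ S ↔ V ω ∈ seqS S g n) := by
    intro n
    induction n with
    | zero => exact Eventually.of_forall fun ω => Iff.rfl
    | succ n ih =>
      filter_upwards [ih, ae_er μ V hVmeas (g n) (hat (g n)) (hall n).1 (hall n).2] with ω h1 h2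
      exact h1.trans h2
  have hinv : ∀ i n, i < n → ∀ w v, Function.update w (g i) v ∈ seqS S g n ↔ w ∈ seqS S g n := by
    intro i n hin
    induction n with
    | zero => omega
    | succ n ih =>
      rcases Nat.lt_succ_iff_lt_or_eq.1 hin with h | h
      · exact er_update_of _ _ _ (ih h)
      · subst h; exact er_update_self _ _
  set T : Set (G → ℝ) := {w | ∃ᶠ n in atTop, w ∈ seqS S g n} with hT
  have hTm : MeasurableSet T := by
    have : T = ⋂ N : ℕ, ⋃ n : ℕ, ⋃ (_ : N ≤ n), seqS S g n := by
      ext w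
      simp [hT, frequently_atTop]
    rw [this]
    exact MeasurableSet.iInter fun N => MeasurableSet.iUnion fun n => MeasurableSet.iUnion fun _ =>
      (hall n).2
  have hTinv : ∀ y w v, Function.update w y v ∈ T ↔ w ∈ T := by
    intro y w v
    obtain ⟨i, rfl⟩ := hg y
    refine frequently_congr ?_
    filter_upwards [eventually_gt_atTop i] with n hn
    exact hinv i n hn w v
  have hTfin : ∀ (Λ : Finset G) (w : G → ℝ), (fun u => if u ∈ Λ then 0 else w u) ∈ T ↔ w ∈ T := by
    intro Λ
    induction Λ using Finset.induction_on with
    | empty => intro w; simp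
    | insert a s ha ih =>
      intro w
      rw [← ih w, ← hTinv a (fun u => if u ∈ s then 0 else w u) 0]
      have : (fun u => if u ∈ insert a s then 0 else w u) =
          Function.update (fun u => if u ∈ s then 0 else w u) a 0 := by
        ext u
        by_cases h : u = a
        · subst h; simp
        · simp [h]
      rw [this]
  have haeT : ∀ᵐ ω ∂μ, (V ω ∈ S ↔ V ω ∈ T) := by
    filter_upwards [ae_all_iff.2 hae] with ω hω
    simp only [hT, Set.mem_ofPred_eq, ← hω]
    simp
  obtain ⟨c, hc⟩ := hK (fun ω => T.indicator (fun _ => (1:ℝ)) (V ω)) (by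
    intro Λ
    have h1 : Measurable[B ↑Λ] (fun ω => (fun u => if u ∈ Λ then 0 else V ω u : G → ℝ)) := by
      refine @measurable_pi_lambda _ _ _ (B ↑Λ) _ _ ?_
      intro u
      by_cases h : u ∈ Λ
      · simp only [h, if_true]; exact @measurable_const _ _ _ (B ↑Λ) _
      · simp only [h, if_false]
        rw [measurable_iff_comap_le, hB]
        exact le_iSup₂_of_le u (by simpa using h) le_rfl
    have h2 : (fun ω => T.indicator (fun _ => (1:ℝ)) (V ω)) =
        (T.indicator (fun _ => (1:ℝ))) ∘ (fun ω => (fun u => if u ∈ Λ then 0 else V ω u : G → ℝ)) := by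
      ext ω
      simp only [Function.comp, Set.indicator, hTfin]
    rw [h2]
    exact (measurable_const.indicator hTm).comp h1)
  by_cases h1 : c = 1
  · right
    have : {ω | V ω ∈ S} =ᵐ[μ] Set.univ := by
      rw [eventuallyEq_univ]
      filter_upwards [hc, haeT] with ω h2 h3
      by_contra h4
      have h5 : V ω ∉ T := fun h => h4 (h3.2 h)
      rw [Set.indicator_of_notMem h5, h1] at h2
      exact zero_ne_one h2
    rw [measure_congr this, measure_univ]
  · left
    rw [measure_eq_zero_iff_ae_notMem]
    filter_upwards [hc, haeT] with ω h2 h3 h4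
    rw [Set.indicator_of_mem (h3.1 h4)] at h2
    exact h1 h2.symm

/-- potentials for which `δ_x` is in the range of `A + w - E - iη`, solution of norm `≤ n` -/
def SE {G : Type*} [DecidableEq G]
    (A : lp (fun _ : G => ℂ) 2 →L[ℂ] lp (fun _ : G => ℂ) 2) (E : ℝ) (x : G) : Set (G → ℝ) :=
  {w | ∃ F : StrongDual ℂ (lp (fun _ : G => ℂ) 2), ∀ u : G,
    F (A (lp.single 2 u (1:ℂ))) + ((w u : ℂ) - E) * F (lp.single 2 u (1:ℂ))
      = if u = x then 1 else 0}

lemma FC_SE {G : Type*} [DecidableEq G]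
    (A : lp (fun _ : G => ℂ) 2 →L[ℂ] lp (fun _ : G => ℂ) 2) (E : ℝ) (x : G) : FC (SE A E x) := by
  intro w y
  by_contra hcon
  rw [not_or] at hcon
  obtain ⟨hF, hN⟩ := hcon
  obtain ⟨v, hv, v', hv', hne⟩ := Set.Infinite.nontrivial hF
  obtain ⟨F, hF⟩ := hv
  obtain ⟨F', hF'⟩ := hv'
  have hFu : ∀ u, u ≠ y → F (A (lp.single 2 u (1:ℂ))) +
      ((w u : ℂ) - E) * F (lp.single 2 u (1:ℂ)) = if u = x then 1 else 0 := by
    intro u hu; have := hF u; rwa [Function.update_of_ne hu] at this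
  have hFu' : ∀ u, u ≠ y → F' (A (lp.single 2 u (1:ℂ))) +
      ((w u : ℂ) - E) * F' (lp.single 2 u (1:ℂ)) = if u = x then 1 else 0 := by
    intro u hu; have := hF' u; rwa [Function.update_of_ne hu] at this
  have hFy := hF y
  have hFy' := hF' y
  rw [Function.update_self] at hFy hFy'
  by_cases h0 : F (lp.single 2 y (1:ℂ)) = 0
  · apply hN
    convert Set.finite_empty
    rw [Set.compl_empty_iff, Set.eq_univ_iff_forall]
    intro t
    refine ⟨F, fun u => ?_⟩
    by_cases hu : u = y
    · subst hu
      rw [Function.update_self, h0, mul_zero]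
      rw [h0, mul_zero] at hFy
      exact hFy
    · rw [Function.update_of_ne hu]; exact hFu u hu
  · have hvv : ((v' : ℂ) - v) ≠ 0 := by
      rw [sub_ne_zero]; exact_mod_cast hne.symm
    set k : ℂ := ((v' : ℂ) - v) * F (lp.single 2 y (1:ℂ)) with hk
    have hk0 : k ≠ 0 := mul_ne_zero hvv h0
    set ψ := k⁻¹ • (F - F') with hψ
    have hψu : ∀ u, u ≠ y → ψ (A (lp.single 2 u (1:ℂ))) +
      ((w u : ℂ) - E) * ψ (lp.single 2 u (1:ℂ)) = 0 := by
      intro u hu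
      simp only [hψ, ContinuousLinearMap.smul_apply, ContinuousLinearMap.sub_apply, smul_eq_mul]
      linear_combination k⁻¹ * (hFu u hu - hFu' u hu)
    have hψy : ψ (A (lp.single 2 y (1:ℂ))) +
      ((v' : ℂ) - E) * ψ (lp.single 2 y (1:ℂ)) = 1 := by
      simp only [hψ, ContinuousLinearMap.smul_apply, ContinuousLinearMap.sub_apply, smul_eq_mul]
      have : k⁻¹ * k = 1 := inv_mul_cancel₀ hk0
      rw [hk] at this ⊢
      linear_combination (((v' : ℂ) - v) * F (lp.single 2 y (1:ℂ)))⁻¹ * (hFy - hFy') + this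
    apply hN
    refine Set.Subsingleton.finite (s := {t | Function.update w y t ∈ SE A E x}ᶜ) ?_
    have hbad : ∀ t : ℝ, Function.update w y t ∉ SE A E x →
        1 + ((t : ℂ) - v') * ψ (lp.single 2 y (1:ℂ)) = 0 := by
      intro t ht
      by_contra h1
      apply ht
      set c : ℂ := -((t : ℂ) - v') * F' (lp.single 2 y (1:ℂ)) /
        (1 + ((t : ℂ) - v') * ψ (lp.single 2 y (1:ℂ))) with hc
      have hc' : c * (1 + ((t : ℂ) - v') * ψ (lp.single 2 y (1:ℂ))) =
        -((t : ℂ) - v') * F' (lp.single 2 y (1:ℂ)) := by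
        rw [hc]; exact div_mul_cancel₀ _ h1
      refine ⟨F' + c • ψ, fun u => ?_⟩
      by_cases hu : u = y
      · subst hu
        rw [Function.update_self]
        simp only [ContinuousLinearMap.smul_apply, ContinuousLinearMap.add_apply, smul_eq_mul]
        linear_combination hFy' + c * hψy + hc'
      · rw [Function.update_of_ne hu]
        simp only [ContinuousLinearMap.smul_apply, ContinuousLinearMap.add_apply, smul_eq_mul]
        linear_combination hFu' u hu + c * hψu u hu
    intro t ht t' ht'
    have h1 := hbad t ht
    have h2 := hbad t' ht'
    have h3 : ((t : ℂ) - t') * ψ (lp.single 2 y (1:ℂ)) = 0 := by linear_combination h1 - h2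
    rcases mul_eq_zero.1 h3 with h | h
    · rw [sub_eq_zero] at h; exact_mod_cast h
    · rw [h] at h1; simp at h1

/-- closed approximants of `SE` -/
def SN {G : Type*} [DecidableEq G]
    (A : lp (fun _ : G => ℂ) 2 →L[ℂ] lp (fun _ : G => ℂ) 2) (E : ℝ) (x : G) (r : ℝ) :
    Set ((G → ℝ) × ℝ) :=
  {p | ∃ F : StrongDual ℂ (lp (fun _ : G => ℂ) 2), ‖F‖ ≤ r ∧ ∀ u : G,
    F (A (lp.single 2 u (1:ℂ))) + ((p.1 u : ℂ) - E + p.2 * Complex.I) * F (lp.single 2 u (1:ℂ))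
      = if u = x then 1 else 0}

lemma isClosed_SN {G : Type*} [DecidableEq G]
    (A : lp (fun _ : G => ℂ) 2 →L[ℂ] lp (fun _ : G => ℂ) 2) (E : ℝ) (x : G) (r : ℝ) :
    IsClosed (SN A E x r) := by
  let K : Set (WeakDual ℂ (lp (fun _ : G => ℂ) 2)) :=
    WeakDual.toStrongDual ⁻¹' Metric.closedBall 0 r
  have hK : IsCompact K := WeakDual.isCompact_closedBall 0 r
  haveI : CompactSpace K := isCompact_iff_compactSpace.1 hK
  let Z : Set (K × ((G → ℝ) × ℝ)) := {q | ∀ u : G,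
    q.1.1 (A (lp.single 2 u (1:ℂ))) + ((q.2.1 u : ℂ) - E + q.2.2 * Complex.I) *
      q.1.1 (lp.single 2 u (1:ℂ)) = if u = x then 1 else 0}
  have hev : ∀ a, Continuous (fun q : K × ((G → ℝ) × ℝ) => q.1.1 a) := fun a =>
    (WeakDual.eval_continuous a).comp (continuous_subtype_val.comp continuous_fst)
  have hZ : IsClosed Z := by
    simp only [Z, Set.ofPred_forall]
    refine isClosed_iInter fun u => isClosed_eq ?_ continuous_const
    have := hev (A (lp.single 2 u (1:ℂ)))
    have := hev ((lp.single 2 u (1:ℂ)))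
    fun_prop
  have := isClosedMap_snd_of_compactSpace (X := K) _ hZ
  convert this using 1
  ext p
  constructor
  · rintro ⟨F, hF, h⟩
    exact ⟨(⟨StrongDual.toWeakDual F, by simpa [K] using hF⟩, p), h, rfl⟩
  · rintro ⟨⟨⟨F, hF⟩, q⟩, h, rfl⟩
    exact ⟨WeakDual.toStrongDual F, by simpa [K] using hF, h⟩

lemma mem_SE_iff {G : Type*} [DecidableEq G]
    (A : lp (fun _ : G => ℂ) 2 →L[ℂ] lp (fun _ : G => ℂ) 2) (E : ℝ) (x : G) (w : G → ℝ) :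
    w ∈ SE A E x ↔ ∃ n : ℕ, (w, (0:ℝ)) ∈ SN A E x n := by
  constructor
  · rintro ⟨F, hF⟩
    obtain ⟨n, hn⟩ := exists_nat_ge ‖F‖
    exact ⟨n, F, hn, by simpa using hF⟩
  · rintro ⟨n, F, _, hF⟩
    exact ⟨F, by simpa using hF⟩

lemma measurableSet_SE {G : Type*} [DecidableEq G] [Countable G]
    (A : lp (fun _ : G => ℂ) 2 →L[ℂ] lp (fun _ : G => ℂ) 2) (E : ℝ) (x : G) :
    MeasurableSet (SE A E x) := by
  have : SE A E x = ⋃ n : ℕ, (fun w : G → ℝ => (w, (0:ℝ))) ⁻¹' SN A E x n := by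
    ext w
    simp [mem_SE_iff]
  rw [this]
  refine MeasurableSet.iUnion fun n => IsClosed.measurableSet ?_
  exact (isClosed_SN A E x n).preimage (by fun_prop)

section
variable {G : Type*} [DecidableEq G]
    {A : lp (fun _ : G => ℂ) 2 →L[ℂ] lp (fun _ : G => ℂ) 2}
    {H : lp (fun _ : G => ℂ) 2 →L[ℂ] lp (fun _ : G => ℂ) 2} {w : G → ℝ}

lemma sa_H (hA : IsSelfAdjoint A)
    (hH : ∀ (ψ : lp (fun _ : G => ℂ) 2) (u : G),
      (H ψ : ∀ _ : G, ℂ) u = (A ψ : ∀ _ : G, ℂ) u + (w u : ℂ) * (ψ : ∀ _ : G, ℂ) u) :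
    IsSelfAdjoint H := by
  have : IsSelfAdjoint (H - A) := by
    rw [ContinuousLinearMap.isSelfAdjoint_iff_isSymmetric]
    intro a b
    have hc : ∀ ψ u, ((H - A) ψ : ∀ _ : G, ℂ) u = (w u : ℂ) * (ψ : ∀ _ : G, ℂ) u := by
      intro ψ u
      simp [hH]
    simp only [ContinuousLinearMap.coe_coe, lp.inner_eq_tsum]
    congr 1
    ext u
    rw [hc, hc]
    simp
    ring
  simpa using this.add hA

lemma lower (hs : IsSelfAdjoint H) (z : ℂ) (ψ : lp (fun _ : G => ℂ) 2) :
    |z.im| * ‖ψ‖ ≤ ‖(H - z • 1) ψ‖ := by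
  have hsym := ContinuousLinearMap.isSelfAdjoint_iff_isSymmetric.1 hs
  have h1 : (inner ℂ ψ (H ψ)).im = 0 := by
    have := hsym.im_inner_self_apply ψ
    simpa using this
  have h2 : (inner ℂ ψ ((H - z • 1) ψ)).im = - z.im * ‖ψ‖^2 := by
    simp only [ContinuousLinearMap.sub_apply, ContinuousLinearMap.smul_apply,
      ContinuousLinearMap.one_apply, inner_sub_right, inner_smul_right, Complex.sub_im, h1,
      inner_self_eq_norm_sq_to_K]
    simp [← Complex.ofReal_pow]
  have h3 : |z.im| * ‖ψ‖^2 ≤ ‖ψ‖ * ‖(H - z • 1) ψ‖ := by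
    calc |z.im| * ‖ψ‖^2 = |(inner ℂ ψ ((H - z • 1) ψ)).im| := by
          rw [h2, abs_mul, abs_neg, abs_of_nonneg (sq_nonneg ‖ψ‖)]
      _ ≤ ‖inner ℂ ψ ((H - z • 1) ψ)‖ := Complex.abs_im_le_norm _
      _ ≤ _ := norm_inner_le_norm _ _
  rcases (norm_nonneg ψ).eq_or_lt with h | h
  · rw [← h]; simp
  · have : ‖ψ‖ * (|z.im| * ‖ψ‖) ≤ ‖ψ‖ * ‖(H - z • 1) ψ‖ := by linarith
    exact le_of_mul_le_mul_left this h

lemma unit_H (hs : IsSelfAdjoint H) (z : ℂ) (hz : z.im ≠ 0) : IsUnit (H - z • 1) := by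
  by_contra h
  have h1 : z ∈ spectrum ℂ H := by
    rw [spectrum.mem_iff, Algebra.algebraMap_eq_smul_one]
    intro h2
    apply h
    simpa using h2.neg
  have := hs.mem_spectrum_eq_re h1
  apply hz
  rw [this]; simp

/-- coordinates as inner products -/
lemma coord (ψ : lp (fun _ : G => ℂ) 2) (u : G) :
    inner ℂ ψ (lp.single 2 u (1:ℂ)) = star ((ψ : ∀ _ : G, ℂ) u) := by
  rw [lp.inner_single_right]
  simp

lemma coordA (hA : IsSelfAdjoint A) (ψ : lp (fun _ : G => ℂ) 2) (u : G) :
    inner ℂ ψ (A (lp.single 2 u (1:ℂ))) = star ((A ψ : ∀ _ : G, ℂ) u) := by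
  have hsym := ContinuousLinearMap.isSelfAdjoint_iff_isSymmetric.1 hA
  rw [← coord]
  exact (hsym ψ _).symm

lemma coordH
    (hH : ∀ (ψ : lp (fun _ : G => ℂ) 2) (u : G),
      (H ψ : ∀ _ : G, ℂ) u = (A ψ : ∀ _ : G, ℂ) u + (w u : ℂ) * (ψ : ∀ _ : G, ℂ) u)
    (z : ℂ) (ψ : lp (fun _ : G => ℂ) 2) (u : G) :
    ((H - z • 1) ψ : ∀ _ : G, ℂ) u =
      (A ψ : ∀ _ : G, ℂ) u + (w u : ℂ) * (ψ : ∀ _ : G, ℂ) u - z * (ψ : ∀ _ : G, ℂ) u := by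
  rw [← hH]
  rfl

lemma coordS (x u : G) :
    ((lp.single 2 x (1:ℂ) : lp (fun _ : G => ℂ) 2) : ∀ _ : G, ℂ) u = if u = x then 1 else 0 := by
  simp [lp.single_apply, Pi.single_apply]

lemma gamma_iff (hA : IsSelfAdjoint A)
    (hH : ∀ (ψ : lp (fun _ : G => ℂ) 2) (u : G),
      (H ψ : ∀ _ : G, ℂ) u = (A ψ : ∀ _ : G, ℂ) u + (w u : ℂ) * (ψ : ∀ _ : G, ℂ) u)
    (E : ℝ) (x : G) :
    (⨆ η : {η : ℝ // 0 < η}, ENNReal.ofReal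
          (‖Ring.inverse (H - ((E : ℂ) + (η : ℝ) * Complex.I) • 1)
            (lp.single 2 x (1:ℂ))‖ ^ 2)) < ⊤ ↔ w ∈ SE A E x := by
  have hs := sa_H hA hH
  have hu : ∀ η : ℝ, 0 < η → IsUnit (H - ((E : ℂ) + (η : ℝ) * Complex.I) • 1) := fun η hη =>
    unit_H hs _ (by simpa using hη.ne')
  constructor
  · intro hfin
    set M := (⨆ η : {η : ℝ // 0 < η}, ENNReal.ofReal
          (‖Ring.inverse (H - ((E : ℂ) + (η : ℝ) * Complex.I) • 1)
            (lp.single 2 x (1:ℂ))‖ ^ 2)) with hM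
    have hb : ∀ η : ℝ, 0 < η → ‖Ring.inverse (H - ((E : ℂ) + (η : ℝ) * Complex.I) • 1)
            (lp.single 2 x (1:ℂ))‖ ^ 2 ≤ M.toReal := by
      intro η hη
      have := le_iSup (fun η : {η : ℝ // 0 < η} => ENNReal.ofReal
          (‖Ring.inverse (H - ((E : ℂ) + (η : ℝ) * Complex.I) • 1)
            (lp.single 2 x (1:ℂ))‖ ^ 2)) ⟨η, hη⟩
      exact (ENNReal.ofReal_le_iff_le_toReal hfin.ne).1 this
    obtain ⟨n, hn⟩ := exists_nat_ge (Real.sqrt M.toReal)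
    rw [mem_SE_iff]
    refine ⟨n, ?_⟩
    have hmem : ∀ η : ℝ, 0 < η → (w, η) ∈ SN A E x n := by
      intro η hη
      set ψ := Ring.inverse (H - ((E : ℂ) + (η : ℝ) * Complex.I) • 1)
            (lp.single 2 x (1:ℂ)) with hψ
      have heq : (H - ((E : ℂ) + (η : ℝ) * Complex.I) • 1) ψ = lp.single 2 x (1:ℂ) := by
        rw [hψ, ← ContinuousLinearMap.mul_apply, Ring.mul_inverse_cancel _ (hu η hη)]
        rfl
      refine ⟨InnerProductSpace.toDual ℂ _ ψ, ?_, fun u => ?_⟩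
      · rw [LinearIsometryEquiv.norm_map]
        exact (Real.le_sqrt_of_sq_le (hb η hη)).trans hn
      · rw [InnerProductSpace.toDual_apply_apply, InnerProductSpace.toDual_apply_apply,
          coord, coordA hA]
        have h1 := congrArg (fun f : lp (fun _ : G => ℂ) 2 => star ((f : ∀ _ : G, ℂ) u)) heq
        simp only [coordH hH, coordS] at h1
        simp only [Complex.star_def, map_sub, map_add, map_mul, Complex.conj_ofReal,
          Complex.conj_I] at h1
        have h2 : (starRingEnd ℂ) (if u = x then (1:ℂ) else 0) = if u = x then 1 else 0 := by
          split_ifs <;> simp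
        simp only [Complex.star_def]
        rw [h2] at h1
        linear_combination h1
    have hcl := isClosed_SN A E x n
    have ht : Tendsto (fun η : ℝ => (w, η)) (𝓝[>] 0) (𝓝 (w, 0)) := by
      have : Continuous (fun η : ℝ => (w, η)) := by fun_prop
      exact (this.tendsto 0).mono_left nhdsWithin_le_nhds
    refine hcl.mem_of_tendsto ht ?_
    filter_upwards [self_mem_nhdsWithin] with η hη
    exact hmem η hη
  · rintro ⟨F, hF⟩
    set φ := (InnerProductSpace.toDual ℂ (lp (fun _ : G => ℂ) 2)).symm F with hφ
    have hFφ : ∀ a, F a = inner ℂ φ a := by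
      intro a
      rw [hφ, InnerProductSpace.toDual_symm_apply]
    have heq : (H - (E : ℂ) • 1) φ = lp.single 2 x (1:ℂ) := by
      ext u
      have h1 := hF u
      rw [hFφ, hFφ, coord, coordA hA] at h1
      have h2 := congrArg star h1
      simp at h2
      rw [coordH hH, coordS]
      linear_combination h2
    refine lt_of_le_of_lt (iSup_le (a := ENNReal.ofReal ((2 * ‖φ‖)^2)) ?_) ENNReal.ofReal_lt_top
    rintro ⟨η, hη⟩
    apply ENNReal.ofReal_le_ofReal
    gcongr
    simp only
    set T := H - ((E : ℂ) + (η : ℝ) * Complex.I) • 1 with hT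
    have hinv : ∀ a, Ring.inverse T (T a) = a := by
      intro a
      rw [← ContinuousLinearMap.mul_apply, Ring.inverse_mul_cancel _ (hu η hη)]
      rfl
    have hinv' : ∀ a, T (Ring.inverse T a) = a := by
      intro a
      rw [← ContinuousLinearMap.mul_apply, Ring.mul_inverse_cancel _ (hu η hη)]
      rfl
    have h1 : (lp.single 2 x (1:ℂ) : lp (fun _ : G => ℂ) 2) = T φ + ((η : ℂ) * Complex.I) • φ := by
      rw [← heq, hT]
      change H φ - (E : ℂ) • φ = (H φ - ((E : ℂ) + (η : ℝ) * Complex.I) • φ) + _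
      rw [add_smul]
      abel
    rw [h1, map_add, hinv, map_smul]
    have h2 := lower hs ((E : ℂ) + (η : ℝ) * Complex.I) (Ring.inverse T φ)
    rw [← hT, hinv'] at h2
    have h3 : |((E : ℂ) + (η : ℝ) * Complex.I).im| = η := by simp [abs_of_pos hη]
    rw [h3] at h2
    calc _ ≤ ‖φ‖ + ‖((η : ℂ) * Complex.I) • Ring.inverse T φ‖ := norm_add_le _ _
      _ = ‖φ‖ + η * ‖Ring.inverse T φ‖ := by
          rw [norm_smul]; simp [abs_of_pos hη]
      _ ≤ 2 * ‖φ‖ := by linarith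

end

end ZeroOne

/-- Zero-one law (boost of the Simon–Wolff criterion): for
`H(ω) = A + V(ω)` on `ℓ²(G)` with a jointly measurable, uniformly bounded random potential
having the K-property and almost surely atomless single-site regular conditional
distributions, for every `x` and Lebesgue-almost every energy `E` the probability that
`γ_x(E) = lim_{η↓0} ‖(H(ω)-(E+iη))⁻¹δ_x‖²` (equivalently, by monotonicity, the supremum
over `η > 0`) is finite equals either `0` or `1`. -/
theorem stmt1 {G : Type*} [Countable G] [DecidableEq G]
    {Ω : Type*} [MeasurableSpace Ω] (μ : Measure Ω) [IsProbabilityMeasure μ]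
    (V : Ω → G → ℝ) (hVmeas : Measurable V)
    (C : ℝ) (hVbdd : ∀ ω u, |V ω u| ≤ C)
    (B : Set G → MeasurableSpace Ω)
    (hB : ∀ Λ : Set G, B Λ =
      ⨆ y ∈ Λᶜ, MeasurableSpace.comap (fun ω => V ω y) inferInstance)
    (hK : ∀ f : Ω → ℝ, (∀ Λ : Finset G, Measurable[B ↑Λ] f) →
      ∃ cst : ℝ, ∀ᵐ ω ∂μ, f ω = cst)
    (hatomless : ∀ x : G,
      ∀ᵐ b ∂(μ.map (fun ω (y : {y : G // y ≠ x}) => V ω (y : G))),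
        ∀ t : ℝ,
          condDistrib (fun ω => V ω x) (fun ω (y : {y : G // y ≠ x}) => V ω (y : G)) μ b {t} = 0)
    (A : lp (fun _ : G => ℂ) 2 →L[ℂ] lp (fun _ : G => ℂ) 2) (hA : IsSelfAdjoint A)
    (H : Ω → (lp (fun _ : G => ℂ) 2 →L[ℂ] lp (fun _ : G => ℂ) 2))
    (hH : ∀ ω (ψ : lp (fun _ : G => ℂ) 2) (u : G),
      (H ω ψ : ∀ _ : G, ℂ) u = (A ψ : ∀ _ : G, ℂ) u + (V ω u : ℂ) * (ψ : ∀ _ : G, ℂ) u)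
    (x : G) :
    ∀ᵐ (E : ℝ) ∂(volume : Measure ℝ),
      μ {ω | (⨆ η : {η : ℝ // 0 < η}, ENNReal.ofReal
          (‖Ring.inverse (H ω - ((E : ℂ) + (η : ℝ) * Complex.I) • 1)
            (lp.single 2 x (1:ℂ))‖ ^ 2)) < ⊤} = 0 ∨
      μ {ω | (⨆ η : {η : ℝ // 0 < η}, ENNReal.ofReal
          (‖Ring.inverse (H ω - ((E : ℂ) + (η : ℝ) * Complex.I) • 1)
            (lp.single 2 x (1:ℂ))‖ ^ 2)) < ⊤} = 1 := by

  haveI : Nonempty G := ⟨x⟩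
  refine Eventually.of_forall fun E => ?_
  have h : ∀ ω, _ ↔ _ := fun ω => ZeroOne.gamma_iff (w := V ω) hA (hH ω) E x
  simp only [h]
  exact ZeroOne.zero_one μ V hVmeas B hB hK hatomless (ZeroOne.FC_SE A E x)
    (ZeroOne.measurableSet_SE A E x)
end

section
/- Let G be a countable set, (Ω, ℬ, ℙ) a probability space, and V : Ω → (G → ℝ) a jointly measurable, uniformly bounded random potential such that for each x ∈ G the regular conditional distribution of V(x) given the remaining variables (V(y))_{y≠x} is ℙ-almost surely atomless. Let A be a bounded self-adjoint operator on ℓ²(G), H(ω) = A + V(ω), and γ_x(E;ω) := lim_{η↓0} ‖(H(ω) − (E+iη))⁻¹ δ_x‖² ∈ (0,∞]. Then for every x ∈ G and Lebesgue-almost every E ∈ ℝ, the event {ω : γ_x(E;ω) < ∞} is measurable at infinity up to null sets: for every finite Λ ⊂ G there exists an event A_Λ in the σ-algebra ℬ_{Λᶜ} generated by {V(y)}_{y∈G∖Λ} whose symmetric difference with {ω : γ_x(E;ω) < ∞} has ℙ-measure zero. -/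
open MeasureTheory ProbabilityTheory Filter Topology
open scoped ENNReal symmDiff

/-- Line property: along each coordinate, constant up to one point. -/
def LineP {G : Type*} [DecidableEq G] (F : Set (G → ℝ)) : Prop :=
  ∀ (W : G → ℝ) (y : G), {v : ℝ | Function.update W y v ∈ F}.Subsingleton ∨
    {v : ℝ | Function.update W y v ∉ F}.Subsingleton

/-- Majority vote along the coordinate `y`. -/
def maj {G : Type*} [DecidableEq G] (F : Set (G → ℝ)) (y : G) : Set (G → ℝ) :=
  {W | (Function.update W y 0 ∈ F ∧ Function.update W y 1 ∈ F) ∨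
    (Function.update W y 0 ∈ F ∧ Function.update W y 2 ∈ F) ∨
    (Function.update W y 1 ∈ F ∧ Function.update W y 2 ∈ F)}

lemma maj_iff {G : Type*} [DecidableEq G] {F : Set (G → ℝ)} (hF : LineP F) (y : G) (W : G → ℝ) :
    {v : ℝ | ¬ (Function.update W y v ∈ F ↔ W ∈ maj F y)}.Subsingleton := by
  have h01 : (0:ℝ) ≠ 1 := by norm_num
  have h02 : (0:ℝ) ≠ 2 := by norm_num
  have h12 : (1:ℝ) ≠ 2 := by norm_num
  rcases hF W y with h | h
  · have hm : W ∉ maj F y := by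
      rintro (⟨a, b⟩ | ⟨a, b⟩ | ⟨a, b⟩)
      · exact h01 (h a b)
      · exact h02 (h a b)
      · exact h12 (h a b)
    intro a ha b hb
    simp only [hm, iff_false, not_not, Set.mem_setOf_eq] at ha hb
    exact h ha hb
  · have hm : W ∈ maj F y := by
      by_contra hc
      simp only [maj, Set.mem_setOf_eq] at hc
      by_cases a : Function.update W y 0 ∈ F
      · by_cases b : Function.update W y 1 ∈ F
        · tauto
        · by_cases c : Function.update W y 2 ∈ F
          · tauto
          · exact h12 (h b c)
      · by_cases b : Function.update W y 1 ∈ F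
        · by_cases c : Function.update W y 2 ∈ F
          · tauto
          · exact h02 (h a c)
        · exact h01 (h a b)
    intro a ha b hb
    simp only [hm, iff_true, Set.mem_setOf_eq] at ha hb
    exact h ha hb

lemma maj_update_self {G : Type*} [DecidableEq G] (F : Set (G → ℝ)) (y : G) (W : G → ℝ) (v : ℝ) :
    Function.update W y v ∈ maj F y ↔ W ∈ maj F y := by
  simp [maj]

lemma maj_line {G : Type*} [DecidableEq G] {F : Set (G → ℝ)} (hF : LineP F) (y : G) :
    LineP (maj F y) := by
  intro W u
  by_cases huy : u = y
  · subst huy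
    by_cases h : W ∈ maj F u
    · right; intro a ha; simp [maj_update_self, h] at ha
    · left; intro a ha; simp [maj_update_self, h] at ha
  by_contra hcon
  rw [not_or] at hcon
  obtain ⟨h1, h2⟩ := hcon
  rw [Set.not_subsingleton_iff] at h1 h2
  obtain ⟨a, ha, b, hb, hab⟩ := h1
  obtain ⟨c, hc, d, hd, hcd⟩ := h2
  have hfin := fun v : ℝ => (maj_iff hF y (Function.update W u v)).finite
  obtain ⟨t, ht⟩ := (((hfin a).union (hfin b)).union ((hfin c).union (hfin d))).exists_notMem
  simp only [Set.mem_union, Set.mem_setOf_eq, not_or, not_not] at ht ha hb hc hd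
  obtain ⟨⟨ta, tb⟩, tc, td⟩ := ht
  rw [Function.update_comm huy] at ta tb tc td
  rcases hF (Function.update W y t) u with h | h
  · exact hab (h (ta.2 ha) (tb.2 hb))
  · exact hcd (h (fun q => hc (tc.1 q)) (fun q => hd (td.1 q)))

lemma maj_meas {G : Type*} [DecidableEq G] {F : Set (G → ℝ)} (hF : MeasurableSet F)
    (y : G) : MeasurableSet (maj F y) := by
  have h : ∀ v : ℝ, MeasurableSet {W : G → ℝ | Function.update W y v ∈ F} := fun v =>
    measurable_update_left hF
  exact ((h 0).inter (h 1)).union (((h 0).inter (h 2)).union ((h 1).inter (h 2)))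

lemma maj_inv {G : Type*} [DecidableEq G] {F : Set (G → ℝ)} {u : G} (y : G)
    (h : ∀ W v, Function.update W u v ∈ F ↔ W ∈ F) (W : G → ℝ) (v : ℝ) :
    Function.update W u v ∈ maj F y ↔ W ∈ maj F y := by
  by_cases huy : u = y
  · subst huy; exact maj_update_self F u W v
  · simp only [maj, Set.mem_setOf_eq, Function.update_comm huy, h]

lemma maj_ae {G : Type*} [Countable G] [DecidableEq G] {F : Set (G → ℝ)} (hF : LineP F)
    (hFm : MeasurableSet F) (y : G)
    {Ω : Type*} [MeasurableSpace Ω] (μ : Measure Ω) [IsProbabilityMeasure μ]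
    (V : Ω → G → ℝ) (hVmeas : Measurable V)
    (hat : ∀ᵐ b ∂(μ.map (fun ω (u : {u : G // u ≠ y}) => V ω (u : G))),
        ∀ t : ℝ,
          condDistrib (fun ω => V ω y) (fun ω (u : {u : G // u ≠ y}) => V ω (u : G)) μ b {t} = 0) :
    ∀ᵐ ω ∂μ, (V ω ∈ F ↔ V ω ∈ maj F y) := by
  set X : Ω → ({u : G // u ≠ y} → ℝ) := fun ω u => V ω (u : G) with hX
  have hXm : Measurable X := by fun_prop
  have hYm : Measurable (fun ω => V ω y) := by fun_prop
  let glue : ({u : G // u ≠ y} → ℝ) × ℝ → (G → ℝ) :=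
    fun p u => if h : u = y then p.2 else p.1 ⟨u, h⟩
  have hg : Measurable glue := by
    refine measurable_pi_lambda _ fun u => ?_
    by_cases h : u = y
    · simp only [glue, h, dite_true]; fun_prop
    · simp only [glue, h, dite_false]; fun_prop
  have hgV : ∀ ω, glue (X ω, V ω y) = V ω := by
    intro ω; funext u
    by_cases h : u = y
    · subst h; simp [glue]
    · simp [glue, h, hX]
  have hgu : ∀ b v, glue (b, v) = Function.update (glue (b, 0)) y v := by
    intro b v; funext u
    by_cases h : u = y
    · subst h; simp [glue]
    · simp [glue, h]
  let N : Set (({u : G // u ≠ y} → ℝ) × ℝ) := {p | ¬ (glue p ∈ F ↔ glue p ∈ maj F y)}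
  have hN : MeasurableSet N := by
    have h1 : MeasurableSet (glue ⁻¹' F) := hg hFm
    have h2 : MeasurableSet (glue ⁻¹' maj F y) := hg (maj_meas hFm y)
    exact (h1.iff h2).compl
  have hNz : μ.map (fun ω => (X ω, V ω y)) N = 0 := by
    rw [← compProd_map_condDistrib hYm.aemeasurable, Measure.compProd_apply hN]
    rw [lintegral_eq_zero_iff (Kernel.measurable_kernel_prodMk_left hN)]
    filter_upwards [hat] with b hb
    have hs : (Prod.mk b ⁻¹' N).Subsingleton := by
      refine (maj_iff hF y (glue (b, 0))).anti ?_
      intro v hv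
      simp only [N, Set.mem_preimage, Set.mem_setOf_eq] at hv ⊢
      rw [hgu b v, maj_update_self] at hv
      exact hv
    rcases hs.eq_empty_or_singleton with h | ⟨t, h⟩
    · simp [h]
    · rw [h]; exact hb t
  rw [Measure.map_apply (by fun_prop) hN] at hNz
  rw [ae_iff]
  convert hNz using 2
  ext ω
  simp [N, hgV]

theorem tail_of_line {G : Type*} [Countable G] [DecidableEq G] {F : Set (G → ℝ)} (hF : LineP F)
    (hFm : MeasurableSet F)
    {Ω : Type*} [MeasurableSpace Ω] (μ : Measure Ω) [IsProbabilityMeasure μ]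
    (V : Ω → G → ℝ) (hVmeas : Measurable V)
    (hat : ∀ y : G, ∀ᵐ b ∂(μ.map (fun ω (u : {u : G // u ≠ y}) => V ω (u : G))),
        ∀ t : ℝ,
          condDistrib (fun ω => V ω y) (fun ω (u : {u : G // u ≠ y}) => V ω (u : G)) μ b {t} = 0)
    (Λ : Finset G) :
    ∃ F' : Set (G → ℝ), LineP F' ∧ MeasurableSet F' ∧
      (∀ u ∈ Λ, ∀ W v, Function.update W u v ∈ F' ↔ W ∈ F') ∧
      ∀ᵐ ω ∂μ, (V ω ∈ F ↔ V ω ∈ F') := by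
  induction Λ using Finset.induction_on with
  | empty => exact ⟨F, hF, hFm, by simp, by simp⟩
  | insert y s hy ih =>
    obtain ⟨F', h1, h2, h3, h4⟩ := ih
    refine ⟨maj F' y, maj_line h1 y, maj_meas h2 y, ?_, ?_⟩
    · intro u hu
      rcases Finset.mem_insert.1 hu with rfl | hu
      · exact maj_update_self F' u
      · exact maj_inv y (h3 u hu)
    · filter_upwards [h4, maj_ae h1 h2 y μ V hVmeas (hat y)] with ω a b
      exact a.trans b

lemma inv_finset {G : Type*} [DecidableEq G] {F : Set (G → ℝ)} (Λ : Finset G)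
    (h : ∀ u ∈ Λ, ∀ W v, Function.update W u v ∈ F ↔ W ∈ F) (W : G → ℝ) :
    (fun u => if u ∈ Λ then 0 else W u) ∈ F ↔ W ∈ F := by
  induction Λ using Finset.induction_on with
  | empty => simp
  | insert y s hy ih =>
    rw [← ih (fun u hu => h u (Finset.mem_insert_of_mem hu)),
      ← h y (Finset.mem_insert_self y s) (fun u => if u ∈ s then 0 else W u) 0]
    have : (fun u => if u ∈ insert y s then 0 else W u) =
      Function.update (fun u => if u ∈ s then 0 else W u) y 0 := by
      funext u
      by_cases hu : u = y
      · subst hu; simp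
      · simp [hu]
    rw [this]

/-- Solution set of the (possibly unbounded) equation `(A + W) φ = δ_x` with norm bound. -/
def SolM {G : Type*} [DecidableEq G] (A : lp (fun _ : G => ℂ) 2 →L[ℂ] lp (fun _ : G => ℂ) 2)
    (x : G) (M : ℝ) : Set (G → ℂ) :=
  {W | ∃ φ : lp (fun _ : G => ℂ) 2, ‖φ‖ ≤ M ∧
    ∀ u, (A φ : ∀ _ : G, ℂ) u + W u * (φ : ∀ _ : G, ℂ) u = (Pi.single x (1:ℂ) : G → ℂ) u}

lemma solM_closed {G : Type*} [DecidableEq G]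
    (A : lp (fun _ : G => ℂ) 2 →L[ℂ] lp (fun _ : G => ℂ) 2) (hA : IsSelfAdjoint A)
    (x : G) (M : ℝ) : IsClosed (SolM A x M) := by
  let E2 := lp (fun _ : G => ℂ) 2
  let K : Set (WeakDual ℂ E2) := WeakDual.toStrongDual ⁻¹' Metric.closedBall 0 M
  have hK : IsCompact K := WeakDual.isCompact_closedBall 0 M
  have : CompactSpace K := isCompact_iff_compactSpace.1 hK
  let T : Set ((G → ℂ) × K) := {p | ∀ u, (starRingEnd ℂ) (p.2.1 (A (lp.single 2 u (1:ℂ)))) +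
    p.1 u * (starRingEnd ℂ) (p.2.1 (lp.single 2 u (1:ℂ))) = (Pi.single x (1:ℂ) : G → ℂ) u}
  have hev : ∀ w : E2, Continuous fun p : (G → ℂ) × K => p.2.1 w := fun w =>
    (WeakDual.eval_continuous w).comp (continuous_subtype_val.comp continuous_snd)
  have hT : IsClosed T := by
    have : T = ⋂ u, {p | (starRingEnd ℂ) (p.2.1 (A (lp.single 2 u (1:ℂ)))) +
      p.1 u * (starRingEnd ℂ) (p.2.1 (lp.single 2 u (1:ℂ))) = (Pi.single x (1:ℂ) : G → ℂ) u} := by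
      ext p; simp [T]
    rw [this]
    refine isClosed_iInter fun u => isClosed_eq ?_ continuous_const
    have h1 := hev (A (lp.single 2 u (1:ℂ)))
    have h2 := hev (lp.single 2 u (1:ℂ))
    have h3 : Continuous fun p : (G → ℂ) × K => p.1 u := (continuous_apply u).comp continuous_fst
    exact (Complex.continuous_conj.comp h1).add (h3.mul (Complex.continuous_conj.comp h2))
  have key : ∀ (φ : E2) (u : G),
      (starRingEnd ℂ) (inner ℂ φ (lp.single 2 u (1:ℂ) : E2)) = (φ : ∀ _ : G, ℂ) u := by
    intro φ u
    rw [inner_conj_symm, lp.inner_single_left]; simp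
  have keyA : ∀ (φ : E2) (u : G),
      (starRingEnd ℂ) (inner ℂ φ (A (lp.single 2 u (1:ℂ)))) = (A φ : ∀ _ : G, ℂ) u := by
    intro φ u
    have hs : inner ℂ (A φ) (lp.single 2 u (1:ℂ) : E2) = inner ℂ φ (A (lp.single 2 u (1:ℂ))) :=
      hA.isSymmetric φ (lp.single 2 u (1:ℂ))
    rw [← key (A φ) u, hs]
  have hS : SolM A x M = Prod.fst '' T := by
    ext W
    constructor
    · rintro ⟨φ, hφ, h⟩
      refine ⟨(W, ⟨StrongDual.toWeakDual (InnerProductSpace.toDual ℂ E2 φ), ?_⟩), ?_, rfl⟩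
      · change (InnerProductSpace.toDual ℂ E2 φ : StrongDual ℂ E2) ∈
          Metric.closedBall (0 : StrongDual ℂ E2) M
        rw [mem_closedBall_zero_iff]
        simpa using hφ
      · intro u
        change (starRingEnd ℂ) (inner ℂ φ (A (lp.single 2 u (1:ℂ)))) +
          W u * (starRingEnd ℂ) (inner ℂ φ (lp.single 2 u (1:ℂ) : E2)) = _
        rw [key, keyA]
        exact h u
    · rintro ⟨⟨W', ⟨l, hl⟩⟩, hp, rfl⟩
      let φ : E2 := (InnerProductSpace.toDual ℂ E2).symm (WeakDual.toStrongDual l)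
      have hlφ : ∀ w, l w = inner ℂ φ w := fun w => by
        simp only [φ, InnerProductSpace.toDual_symm_apply]; rfl
      refine ⟨φ, ?_, fun u => ?_⟩
      · have : WeakDual.toStrongDual l ∈ Metric.closedBall 0 M := hl
        rw [mem_closedBall_zero_iff] at this
        simpa [φ] using this
      · have := hp u
        simp only [hlφ] at this
        rw [key, keyA] at this
        exact this
  rw [hS]
  exact isClosedMap_fst_of_compactSpace _ hT

/-- Good configurations. -/
def Good {G : Type*} [DecidableEq G] (A : lp (fun _ : G => ℂ) 2 →L[ℂ] lp (fun _ : G => ℂ) 2)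
    (E : ℝ) (x : G) : Set (G → ℝ) :=
  {W | ∃ φ : lp (fun _ : G => ℂ) 2,
    ∀ u, (A φ : ∀ _ : G, ℂ) u + ((W u : ℂ) - E) * (φ : ∀ _ : G, ℂ) u =
      (Pi.single x (1:ℂ) : G → ℂ) u}

lemma good_meas {G : Type*} [Countable G] [DecidableEq G]
    (A : lp (fun _ : G => ℂ) 2 →L[ℂ] lp (fun _ : G => ℂ) 2) (hA : IsSelfAdjoint A)
    (E : ℝ) (x : G) : MeasurableSet (Good A E x) := by
  have : Good A E x = ⋃ n : ℕ, (fun (W : G → ℝ) (u : G) => (W u : ℂ) - E) ⁻¹' (SolM A x n) := by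
    ext W
    simp only [Good, SolM, Set.mem_setOf_eq, Set.mem_iUnion, Set.mem_preimage]
    constructor
    · rintro ⟨φ, h⟩
      obtain ⟨n, hn⟩ := exists_nat_ge ‖φ‖
      exact ⟨n, φ, hn, h⟩
    · rintro ⟨n, φ, -, h⟩
      exact ⟨φ, h⟩
  rw [this]
  refine MeasurableSet.iUnion fun n => IsClosed.measurableSet ?_
  refine (solM_closed A hA x n).preimage ?_
  fun_prop

/-- if good at one value for `x = y`, then good off one point. -/
lemma good_self {G : Type*} [DecidableEq G]
    (A : lp (fun _ : G => ℂ) 2 →L[ℂ] lp (fun _ : G => ℂ) 2)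
    (E : ℝ) (x : G) (W : G → ℝ) (v : ℝ) (h : Function.update W x v ∈ Good A E x) :
    {v : ℝ | Function.update W x v ∉ Good A E x}.Subsingleton := by
  obtain ⟨φ, hφ⟩ := h
  have key : ∀ w : ℝ, Function.update W x w ∉ Good A E x →
      1 + ((w:ℂ) - v) * (φ : ∀ _ : G, ℂ) x = 0 := by
    intro w hw
    by_contra hne
    apply hw
    refine ⟨(1 + ((w:ℂ) - v) * (φ : ∀ _ : G, ℂ) x)⁻¹ • φ, fun u => ?_⟩
    have hu := hφ u
    simp only [map_smul, lp.coeFn_smul, Pi.smul_apply, smul_eq_mul]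
    by_cases hux : u = x
    · subst hux
      simp only [Function.update_self, Pi.single_eq_same] at hu ⊢
      field_simp
      linear_combination hu
    · simp only [Function.update_of_ne hux, Pi.single_eq_of_ne hux] at hu ⊢
      linear_combination (1 + ((w:ℂ) - v) * (φ : ∀ _ : G, ℂ) x)⁻¹ * hu
  intro a ha b hb
  have h1 := key a ha
  have h2 := key b hb
  have hz : (φ : ∀ _ : G, ℂ) x ≠ 0 := by
    intro h0; simp [h0] at h1
  have : ((a:ℂ) - b) * (φ : ∀ _ : G, ℂ) x = 0 := by linear_combination h1 - h2
  rcases mul_eq_zero.1 this with h | h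
  · exact_mod_cast sub_eq_zero.1 h
  · exact absurd h hz

lemma good_line {G : Type*} [DecidableEq G]
    (A : lp (fun _ : G => ℂ) 2 →L[ℂ] lp (fun _ : G => ℂ) 2)
    (E : ℝ) (x : G) : LineP (Good A E x) := by
  intro W y
  by_cases hxy : y = x
  · subst hxy
    by_cases h : ∃ v, Function.update W y v ∈ Good A E y
    · obtain ⟨v, hv⟩ := h
      exact Or.inr (good_self A E y W v hv)
    · left; intro a ha; exact absurd ⟨a, ha⟩ h
  -- `φ` solves for `v`; add a multiple of a solution for `y`
  have step1 : ∀ v w, Function.update W y v ∈ Good A E x → Function.update W y w ∈ Good A E y →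
      Function.update W y w ∈ Good A E x := by
    rintro v w ⟨φ, hφ⟩ ⟨χ, hχ⟩
    refine ⟨φ - (((w:ℂ) - v) * (φ : ∀ _ : G, ℂ) y) • χ, fun u => ?_⟩
    have h1 := hφ u
    have h2 := hχ u
    simp only [map_sub, map_smul, lp.coeFn_smul, lp.coeFn_sub, Pi.sub_apply, Pi.smul_apply,
      smul_eq_mul]
    by_cases hu : u = y
    · subst hu
      simp only [Function.update_self, Pi.single_eq_same] at h1 h2 ⊢
      linear_combination h1 - (((w:ℂ) - v) * (φ : ∀ _ : G, ℂ) u) * h2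
    · simp only [Function.update_of_ne hu, Pi.single_eq_of_ne hu] at h1 h2 ⊢
      linear_combination h1 - (((w:ℂ) - v) * (φ : ∀ _ : G, ℂ) y) * h2
  have step2 : ∀ v w, v ≠ w → Function.update W y v ∈ Good A E x →
      Function.update W y w ∈ Good A E x → (∀ t, Function.update W y t ∈ Good A E x) ∨
        Function.update W y w ∈ Good A E y := by
    rintro v w hvw ⟨φ, hφ⟩ ⟨ψ, hψ⟩
    by_cases h0 : (φ : ∀ _ : G, ℂ) y = 0
    · left; intro t
      refine ⟨φ, fun u => ?_⟩
      have h1 := hφ u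
      by_cases hu : u = y
      · subst hu
        simp only [Function.update_self, h0] at h1 ⊢
        linear_combination h1
      · simp only [Function.update_of_ne hu] at h1 ⊢
        exact h1
    · right
      have hne : ((w:ℂ) - v) ≠ 0 := by
        rw [sub_ne_zero]; exact_mod_cast hvw.symm
      refine ⟨(((w:ℂ) - v) * (φ : ∀ _ : G, ℂ) y)⁻¹ • (φ - ψ), fun u => ?_⟩
      have h1 := hφ u
      have h2 := hψ u
      simp only [map_sub, map_smul, lp.coeFn_smul, lp.coeFn_sub, Pi.sub_apply, Pi.smul_apply,
        smul_eq_mul]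
      by_cases hu : u = y
      · subst hu
        simp only [Function.update_self, Pi.single_eq_same] at h1 h2 ⊢
        field_simp
        linear_combination h1 - h2
      · simp only [Function.update_of_ne hu, Pi.single_eq_of_ne hu] at h1 h2 ⊢
        linear_combination (((w:ℂ) - v) * (φ : ∀ _ : G, ℂ) y)⁻¹ * (h1 - h2)
  by_contra hcon
  rw [not_or, Set.not_subsingleton_iff] at hcon
  obtain ⟨⟨v, hv, w, hw, hvw⟩, h2⟩ := hcon
  apply h2
  rcases step2 v w hvw hv hw with h | h
  · intro a ha; exact absurd (h a) ha
  · refine (good_self A E y W w h).anti fun t ht => ?_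
    exact fun hc => ht (step1 v t hv hc)

lemma lower_bound {F : Type*} [NormedAddCommGroup F] [InnerProductSpace ℂ F] [CompleteSpace F]
    (H : F →L[ℂ] F) (hH : IsSelfAdjoint H) (E η : ℝ) (hη : 0 < η) (χ : F) :
    η * ‖χ‖ ≤ ‖(H - ((E:ℂ) + η * Complex.I) • (1 : F →L[ℂ] F)) χ‖ := by
  have him : (inner ℂ χ (H χ)).im = 0 := by
    have h1 : inner ℂ (H χ) χ = inner ℂ χ (H χ) := hH.isSymmetric χ χ
    have h2 := inner_conj_symm (𝕜 := ℂ) (H χ) χ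
    rw [h1] at h2
    exact Complex.conj_eq_iff_im.1 h2
  have h3 : (inner ℂ χ ((H - ((E:ℂ) + η * Complex.I) • (1 : F →L[ℂ] F)) χ)).im
      = - (η * ‖χ‖ ^ 2) := by
    simp only [ContinuousLinearMap.sub_apply, ContinuousLinearMap.smul_apply,
      ContinuousLinearMap.one_apply, inner_sub_right, inner_smul_right, inner_self_eq_norm_sq_to_K,
      Complex.sub_im, him]
    simp [← Complex.ofReal_pow]
  have h4 : η * ‖χ‖ ^ 2 ≤ ‖χ‖ * ‖(H - ((E:ℂ) + η * Complex.I) • (1 : F →L[ℂ] F)) χ‖ := by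
    calc η * ‖χ‖ ^ 2 = |(inner ℂ χ ((H - ((E:ℂ) + η * Complex.I) • (1 : F →L[ℂ] F)) χ)).im| := by
          rw [h3, abs_neg, abs_of_nonneg (by positivity)]
      _ ≤ _ := Complex.abs_im_le_norm _
      _ ≤ _ := norm_inner_le_norm _ _
  rcases eq_or_lt_of_le (norm_nonneg χ) with h | h
  · rw [← h]; simp
  · refine le_of_mul_le_mul_left ?_ h
    linarith

lemma isUnit_shift {F : Type*} [NormedAddCommGroup F] [InnerProductSpace ℂ F] [CompleteSpace F]
    (H : F →L[ℂ] F) (hH : IsSelfAdjoint H) (E η : ℝ) (hη : 0 < η) :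
    IsUnit (H - ((E:ℂ) + η * Complex.I) • (1 : F →L[ℂ] F)) := by
  by_contra hc
  have : ((E:ℂ) + η * Complex.I) ∈ spectrum ℂ H := by
    rw [spectrum.mem_iff, Algebra.algebraMap_eq_smul_one]
    intro h
    apply hc
    rw [← neg_sub]
    exact h.neg
  have := hH.im_eq_zero_of_mem_spectrum this
  simp at this
  exact hη.ne' this

lemma selfAdj_H {G : Type*} [DecidableEq G]
    (A H : lp (fun _ : G => ℂ) 2 →L[ℂ] lp (fun _ : G => ℂ) 2) (hA : IsSelfAdjoint A)
    (W : G → ℝ)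
    (hH : ∀ (ψ : lp (fun _ : G => ℂ) 2) (u : G),
      (H ψ : ∀ _ : G, ℂ) u = (A ψ : ∀ _ : G, ℂ) u + (W u : ℂ) * (ψ : ∀ _ : G, ℂ) u) :
    IsSelfAdjoint H := by
  have hD : IsSelfAdjoint (H - A) := by
    rw [ContinuousLinearMap.isSelfAdjoint_iff_isSymmetric]
    intro φ ψ
    have h : ∀ (ψ : lp (fun _ : G => ℂ) 2) (u : G),
      ((H - A) ψ : ∀ _ : G, ℂ) u = (W u : ℂ) * (ψ : ∀ _ : G, ℂ) u := by
      intro ψ u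
      rw [ContinuousLinearMap.sub_apply, lp.coeFn_sub, Pi.sub_apply, hH]; ring
    change inner ℂ ((H - A) φ) ψ = inner ℂ φ ((H - A) ψ)
    rw [lp.inner_eq_tsum, lp.inner_eq_tsum]
    congr 1; funext u
    rw [h, h]
    simp
    ring
  simpa using hD.add hA

lemma good_iff {G : Type*} [DecidableEq G]
    (A H : lp (fun _ : G => ℂ) 2 →L[ℂ] lp (fun _ : G => ℂ) 2) (hA : IsSelfAdjoint A)
    (W : G → ℝ)
    (hH : ∀ (ψ : lp (fun _ : G => ℂ) 2) (u : G),
      (H ψ : ∀ _ : G, ℂ) u = (A ψ : ∀ _ : G, ℂ) u + (W u : ℂ) * (ψ : ∀ _ : G, ℂ) u)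
    (E : ℝ) (x : G) :
    (⨆ η : {η : ℝ // 0 < η}, ENNReal.ofReal
          (‖Ring.inverse (H - ((E : ℂ) + (η : ℝ) * Complex.I) • 1)
            (lp.single 2 x (1:ℂ))‖ ^ 2)) < ⊤ ↔ W ∈ Good A E x := by
  have hHs := selfAdj_H A H hA W hH
  have hinv : ∀ η : ℝ, 0 < η → (H - ((E : ℂ) + η * Complex.I) • 1)
      (Ring.inverse (H - ((E : ℂ) + η * Complex.I) • 1) (lp.single 2 x (1:ℂ))) =
        lp.single 2 x (1:ℂ) := by
    intro η hη
    rw [← ContinuousLinearMap.mul_apply, Ring.mul_inverse_cancel _ (isUnit_shift H hHs E η hη)]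
    rfl
  constructor
  · intro hlt
    obtain ⟨M, hM⟩ : ∃ M : ℝ, ∀ η : ℝ, 0 < η →
        ‖Ring.inverse (H - ((E : ℂ) + η * Complex.I) • 1) (lp.single 2 x (1:ℂ))‖ ≤ M := by
      set S := (⨆ η : {η : ℝ // 0 < η}, ENNReal.ofReal
          (‖Ring.inverse (H - ((E : ℂ) + (η : ℝ) * Complex.I) • 1)
            (lp.single 2 x (1:ℂ))‖ ^ 2)) with hS
      refine ⟨Real.sqrt S.toReal, fun η hη => ?_⟩
      apply Real.le_sqrt_of_sq_le
      rw [← ENNReal.ofReal_le_iff_le_toReal hlt.ne]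
      exact le_iSup (fun η : {η : ℝ // 0 < η} => ENNReal.ofReal
          (‖Ring.inverse (H - ((E : ℂ) + (η : ℝ) * Complex.I) • 1)
            (lp.single 2 x (1:ℂ))‖ ^ 2)) ⟨η, hη⟩
    have hmem : (fun u => (W u : ℂ) - E) ∈ SolM A x M := by
      have hlim : Tendsto (fun (n : ℕ) (u : G) => (W u : ℂ) - E -
          ((1 / ((n:ℝ) + 1) : ℝ) : ℂ) * Complex.I) atTop (𝓝 (fun u => (W u : ℂ) - E)) := by
        rw [tendsto_pi_nhds]
        intro u
        have h1 := (Complex.continuous_ofReal.tendsto _).comp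
          (tendsto_one_div_add_atTop_nhds_zero_nat (𝕜 := ℝ))
        have h2 := (tendsto_const_nhds (x := (W u : ℂ) - E)).sub (h1.mul_const Complex.I)
        simpa using h2
      refine (solM_closed A hA x M).mem_of_tendsto hlim (Eventually.of_forall fun n => ?_)
      have hη : (0:ℝ) < 1 / ((n:ℝ) + 1) := by positivity
      generalize (1 / ((n:ℝ) + 1) : ℝ) = η at hη
      refine ⟨_, hM η hη, fun u => ?_⟩
      have h := congrArg (fun f : lp (fun _ : G => ℂ) 2 => (f : ∀ _ : G, ℂ) u) (hinv η hη)
      simp only [ContinuousLinearMap.sub_apply, ContinuousLinearMap.smul_apply,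
        ContinuousLinearMap.one_apply, lp.coeFn_sub, lp.coeFn_smul, Pi.sub_apply, Pi.smul_apply,
        smul_eq_mul, hH, lp.coeFn_single] at h
      rw [← h]; ring
    obtain ⟨φ, -, h⟩ := hmem
    exact ⟨φ, h⟩
  · rintro ⟨φ, hφ⟩
    have hφ' : H φ - (E:ℂ) • φ = lp.single 2 x (1:ℂ) := by
      ext u
      have := hφ u
      simp only [lp.coeFn_sub, lp.coeFn_smul, Pi.sub_apply, Pi.smul_apply,
        smul_eq_mul, hH, lp.coeFn_single]
      rw [← this]; ring
    refine lt_of_le_of_lt (iSup_le (a := ENNReal.ofReal ((2 * ‖φ‖) ^ 2)) ?_) ENNReal.ofReal_lt_top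
    rintro ⟨η, hη⟩
    apply ENNReal.ofReal_le_ofReal
    refine pow_le_pow_left₀ (norm_nonneg _) ?_ 2
    change ‖Ring.inverse (H - ((E : ℂ) + η * Complex.I) • 1) (lp.single 2 x (1:ℂ))‖ ≤ _
    have h1 := hinv η hη
    set ψ := Ring.inverse (H - ((E : ℂ) + η * Complex.I) • 1) (lp.single 2 x (1:ℂ)) with hψ
    have h2 := lower_bound H hHs E η hη (ψ - φ)
    have h3 : (H - ((E:ℂ) + η * Complex.I) • 1) (ψ - φ) = ((η:ℂ) * Complex.I) • φ := by
      rw [map_sub, h1, ← hφ']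
      simp only [ContinuousLinearMap.sub_apply, ContinuousLinearMap.smul_apply,
        ContinuousLinearMap.one_apply]
      module
    rw [h3, norm_smul] at h2
    simp only [Complex.norm_mul, Complex.norm_I, Complex.norm_real, mul_one, Real.norm_eq_abs,
      abs_of_pos hη] at h2
    have h4 : ‖ψ - φ‖ ≤ ‖φ‖ := le_of_mul_le_mul_left h2 hη
    have h5 : ‖ψ‖ ≤ ‖ψ - φ‖ + ‖φ‖ := by simpa using norm_add_le (ψ - φ) φ
    linarith

/-- Measurability at infinity of the Simon–Wolff event: for
`H(ω) = A + V(ω)` on `ℓ²(G)` with a jointly measurable, uniformly bounded random potential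
whose single-site regular conditional distributions are almost surely atomless, for every
`x` and Lebesgue-almost every energy `E`, the event `{γ_x(E) < ∞}` (with
`γ_x(E) = lim_{η↓0} ‖(H(ω)-(E+iη))⁻¹δ_x‖²`, i.e. the supremum over `η > 0`) agrees, up to
a `ℙ`-null symmetric difference, with an event in the σ-algebra generated by the potential
outside any prescribed finite set `Λ`. -/
theorem stmt2 {G : Type*} [Countable G] [DecidableEq G]
    {Ω : Type*} [MeasurableSpace Ω] (μ : Measure Ω) [IsProbabilityMeasure μ]
    (V : Ω → G → ℝ) (hVmeas : Measurable V)
    (C : ℝ) (hVbdd : ∀ ω u, |V ω u| ≤ C)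
    (B : Set G → MeasurableSpace Ω)
    (hB : ∀ Λ : Set G, B Λ =
      ⨆ y ∈ Λᶜ, MeasurableSpace.comap (fun ω => V ω y) inferInstance)
    (hatomless : ∀ x : G,
      ∀ᵐ b ∂(μ.map (fun ω (y : {y : G // y ≠ x}) => V ω (y : G))),
        ∀ t : ℝ,
          condDistrib (fun ω => V ω x) (fun ω (y : {y : G // y ≠ x}) => V ω (y : G)) μ b {t} = 0)
    (A : lp (fun _ : G => ℂ) 2 →L[ℂ] lp (fun _ : G => ℂ) 2) (hA : IsSelfAdjoint A)
    (H : Ω → (lp (fun _ : G => ℂ) 2 →L[ℂ] lp (fun _ : G => ℂ) 2))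
    (hH : ∀ ω (ψ : lp (fun _ : G => ℂ) 2) (u : G),
      (H ω ψ : ∀ _ : G, ℂ) u = (A ψ : ∀ _ : G, ℂ) u + (V ω u : ℂ) * (ψ : ∀ _ : G, ℂ) u)
    (x : G) :
    ∀ᵐ (E : ℝ) ∂(volume : Measure ℝ), ∀ Λ : Finset G,
      ∃ AΛ : Set Ω, MeasurableSet[B ↑Λ] AΛ ∧
        μ (AΛ ∆ {ω | (⨆ η : {η : ℝ // 0 < η}, ENNReal.ofReal
          (‖Ring.inverse (H ω - ((E : ℂ) + (η : ℝ) * Complex.I) • 1)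
            (lp.single 2 x (1:ℂ))‖ ^ 2)) < ⊤}) = 0 := by

  refine Eventually.of_forall fun E Λ => ?_
  obtain ⟨F', -, h2, h3, h4⟩ := tail_of_line (good_line A E x) (good_meas A hA E x) μ V hVmeas
    hatomless Λ
  refine ⟨V ⁻¹' F', ?_, ?_⟩
  · have hm : @Measurable _ _ (B ↑Λ) _ (fun ω (u : G) => if u ∈ Λ then (0:ℝ) else V ω u) := by
      refine @measurable_pi_lambda _ _ _ (B ↑Λ) _ _ fun u => ?_
      by_cases hu : u ∈ Λ
      · simp only [hu, if_true]
        exact @measurable_const _ _ _ (B ↑Λ) _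
      · simp only [hu, if_false]
        rw [measurable_iff_comap_le, hB]
        exact le_iSup₂_of_le (f := fun y (_ : y ∈ ((Λ : Set G))ᶜ) =>
          MeasurableSpace.comap (fun ω => V ω y) inferInstance) u (by simpa using hu) le_rfl
    have : V ⁻¹' F' = (fun ω (u : G) => if u ∈ Λ then (0:ℝ) else V ω u) ⁻¹' F' := by
      ext ω
      exact (inv_finset Λ h3 (V ω)).symm
    rw [this]
    exact hm h2
  · have hset : {ω | (⨆ η : {η : ℝ // 0 < η}, ENNReal.ofReal
          (‖Ring.inverse (H ω - ((E : ℂ) + (η : ℝ) * Complex.I) • 1)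
            (lp.single 2 x (1:ℂ))‖ ^ 2)) < ⊤} = V ⁻¹' Good A E x := by
      ext ω
      exact good_iff A (H ω) hA (V ω) (hH ω) E x
    rw [hset, measure_symmDiff_eq_zero_iff]
    filter_upwards [h4] with ω h
    exact propext h.symm
end

section
/- Let G be a countable set, A a bounded self-adjoint operator on ℓ²(G), (Ω, ℬ, ℙ) a probability space, and V : Ω → (G → ℝ) a jointly measurable, uniformly bounded random potential such that for each x ∈ G the regular conditional distribution of V(x) given the remaining variables (V(y))_{y≠x} is ℙ-almost surely absolutely continuous with respect to Lebesgue measure. Let H(ω) = A + V(ω), and γ_x(E;ω) := lim_{η↓0} ‖(H(ω) − (E+iη))⁻¹ δ_x‖² ∈ (0,∞]. Let I ⊂ ℝ be a Borel set and assume that for every x ∈ G, for Lebesgue-almost every E ∈ I and ℙ-almost every ω, γ_x(E;ω) = ∞. Then ℙ-almost surely H(ω) has no eigenvalues in I: for ℙ-almost every ω, for every E ∈ I, ker(H(ω) − E) = {0}. -/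
open MeasureTheory ProbabilityTheory Filter Topology
open scoped ENNReal

namespace SW

noncomputable abbrev Hs (G : Type*) := lp (fun _ : G => ℂ) 2

variable {G : Type*}

/-- Bounded solution of `(A + p - E) φ = δ_x`. -/
def Sol [DecidableEq G] (A : Hs G →L[ℂ] Hs G) (x : G) (n : ℕ) (p : G → ℝ) (E : ℝ) : Prop :=
  ∃ φ : Hs G, ‖φ‖ ≤ n ∧ ∀ u, (A φ : G → ℂ) u + ((p u : ℂ) - E) * (φ : G → ℂ) u
    = if u = x then 1 else 0

/-- Bounded eigenfunction with `φ x = 1`. -/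
def Eig (A : Hs G →L[ℂ] Hs G) (x : G) (n : ℕ) (p : G → ℝ) (E : ℝ) : Prop :=
  ∃ φ : Hs G, ‖φ‖ ≤ n ∧ (φ : G → ℂ) x = 1 ∧
    ∀ u, (A φ : G → ℂ) u + ((p u : ℂ) - E) * (φ : G → ℂ) u = 0

lemma green [DecidableEq G] (A : Hs G →L[ℂ] Hs G) (hA : IsSelfAdjoint A) (x : G) (p p' : G → ℝ)
    (hp : ∀ u, u ≠ x → p u = p' u) (E E' : ℝ) (φ φ' : Hs G)
    (h : ∀ u, (A φ : G → ℂ) u + ((p u : ℂ) - E) * (φ : G → ℂ) u = 0)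
    (h' : ∀ u, (A φ' : G → ℂ) u + ((p' u : ℂ) - E') * (φ' : G → ℂ) u = 0)
    (hx : (φ : G → ℂ) x = 1) (hx' : (φ' : G → ℂ) x = 1) :
    ((E : ℂ) - E') * inner ℂ φ' φ = p x - p' x := by
  have h1 := lp.hasSum_inner (𝕜 := ℂ) φ' (A φ)
  have h2 := lp.hasSum_inner (𝕜 := ℂ) (A φ') φ
  have h3 := (lp.hasSum_inner (𝕜 := ℂ) φ' φ).mul_left ((E : ℂ) - E')
  have hs : inner ℂ (A φ') φ = inner ℂ φ' (A φ) := hA.isSymmetric φ' φ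
  rw [hs] at h2
  have h4 := h3.sub (h1.sub h2)
  rw [sub_self, sub_zero] at h4
  refine h4.unique ?_
  refine (congrArg (fun f : G → ℂ => HasSum f ((p x : ℂ) - p' x)) (funext fun u => ?_)).mpr
    (hasSum_ite_eq x ((p x : ℂ) - p' x))
  have e1 : (A φ : G → ℂ) u = (E - p u) * (φ : G → ℂ) u := by linear_combination h u
  have e2 : (A φ' : G → ℂ) u = (E' - p' u) * (φ' : G → ℂ) u := by linear_combination h' u
  rw [e1, e2]
  simp only [RCLike.inner_apply, map_mul, map_sub, Complex.conj_ofReal]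
  split_ifs with hu
  · subst hu
    rw [hx, hx']; simp; ring
  · rw [hp u hu]; ring

lemma res_bound [DecidableEq G] (A : Hs G →L[ℂ] Hs G) (hA : IsSelfAdjoint A) (x : G) (p : G → ℝ)
    (E η : ℝ) (hη : 0 < η) (ψ w : Hs G)
    (h : ∀ u, (A ψ : G → ℂ) u + ((p u : ℂ) - E) * (ψ : G → ℂ) u = if u = x then 1 else 0)
    (h' : ∀ u, (A w : G → ℂ) u + ((p u : ℂ) - (E + η * Complex.I)) * (w : G → ℂ) u
      = if u = x then 1 else 0) : ‖w‖ ≤ ‖ψ‖ := by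
  set χ : Hs G := w - ψ with hχ
  have e : ∀ u, (A χ : G → ℂ) u - η * Complex.I * (w : G → ℂ) u
      = - (((p u : ℂ) - E) * (χ : G → ℂ) u) := by
    intro u
    have : (A χ : G → ℂ) u = (A w : G → ℂ) u - (A ψ : G → ℂ) u := by rw [hχ, map_sub]; rfl
    have h2 : (χ : G → ℂ) u = (w : G → ℂ) u - (ψ : G → ℂ) u := rfl
    rw [this, h2]; linear_combination h' u - h u
  have h1 := lp.hasSum_inner (𝕜 := ℂ) χ (A χ - ((η : ℂ) * Complex.I) • w)
  have him : (inner ℂ χ (A χ - ((η : ℂ) * Complex.I) • w)).im = 0 := by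
    have h2 := Complex.hasSum_im h1
    refine h2.unique ?_
    convert hasSum_zero using 1
    ext u
    have : ((A χ - ((η : ℂ) * Complex.I) • w : Hs G) : G → ℂ) u
      = - (((p u : ℂ) - E) * (χ : G → ℂ) u) := by rw [← e u]; rfl
    rw [this]
    simp [RCLike.inner_apply]; ring
  have hreal : (inner ℂ χ (A χ)).im = 0 := by
    have := hA.isSymmetric.im_inner_self_apply χ
    simp at this
    exact this
  rw [inner_sub_right, inner_smul_right, Complex.sub_im, hreal] at him
  have hre : (inner ℂ χ w).re = 0 := by
    simp at him
    rcases him with h | h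
    · linarith
    · exact h
  rw [hχ, inner_sub_left, Complex.sub_re] at hre
  have h6 : (inner ℂ w w).re = ‖w‖ ^ 2 := by
    rw [inner_self_eq_norm_sq_to_K]; norm_cast
  have h7 : (inner ℂ ψ w).re ≤ ‖ψ‖ * ‖w‖ := (Complex.re_le_norm _).trans (norm_inner_le_norm _ _)
  by_contra hc
  push Not at hc
  nlinarith [norm_nonneg ψ, norm_nonneg w]

lemma sup_ne_top [DecidableEq G] (A : Hs G →L[ℂ] Hs G) (hA : IsSelfAdjoint A) (x : G) (p : G → ℝ)
    (H : Hs G →L[ℂ] Hs G)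
    (hH : ∀ (ψ : Hs G) (u : G),
      (H ψ : ∀ _ : G, ℂ) u = (A ψ : ∀ _ : G, ℂ) u + (p u : ℂ) * (ψ : ∀ _ : G, ℂ) u)
    (E : ℝ) (n : ℕ) (hs : Sol A x n p E) :
    (⨆ η : {η : ℝ // 0 < η}, ENNReal.ofReal
        (‖Ring.inverse (H - ((E : ℂ) + (η : ℝ) * Complex.I) • 1)
          (lp.single 2 x (1:ℂ))‖ ^ 2)) ≠ ⊤ := by
  obtain ⟨ψ, hn, hψ⟩ := hs
  refine ne_top_of_le_ne_top (b := ENNReal.ofReal (‖ψ‖ ^ 2)) ENNReal.ofReal_ne_top ?_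
  refine iSup_le ?_
  rintro ⟨η, hη⟩
  apply ENNReal.ofReal_le_ofReal
  gcongr
  by_cases hu : IsUnit (H - ((E : ℂ) + (η : ℝ) * Complex.I) • 1)
  · refine res_bound A hA x p E η hη ψ _ hψ ?_
    set w := Ring.inverse (H - ((E : ℂ) + (η : ℝ) * Complex.I) • 1) (lp.single 2 x (1:ℂ)) with hw
    have h1 : (H - ((E : ℂ) + (η : ℝ) * Complex.I) • 1) w = lp.single 2 x (1:ℂ) := by
      rw [hw, ← mul_apply_eq_comp, Ring.mul_inverse_cancel _ hu]; rfl
    intro u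
    have h2 := congrArg (fun f : Hs G => (f : G → ℂ) u) h1
    have h3 : ((H - ((E : ℂ) + (η : ℝ) * Complex.I) • 1) w : G → ℂ) u
      = (H w : G → ℂ) u - ((E : ℂ) + (η : ℝ) * Complex.I) * (w : G → ℂ) u := rfl
    simp only [h3, hH, lp.single_apply, Pi.single_apply] at h2
    rw [← h2]; ring
  · rw [Ring.inverse_non_unit _ hu]; simp

lemma closed_proj {X Y : Type*} [TopologicalSpace X] [TopologicalSpace Y] {F : Set (X × Y)}
    (hF : IsClosed F) {K : Set Y} (hK : IsCompact K) : IsClosed {x | ∃ y ∈ K, (x, y) ∈ F} := by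
  have := isCompact_iff_compactSpace.1 hK
  have h := isClosedMap_fst_of_compactSpace (X := X) (Y := K)
    ((fun q : X × K => (q.1, (q.2 : Y))) ⁻¹' F) (hF.preimage (by fun_prop))
  convert h using 1
  ext x
  simp

lemma closed_aux [DecidableEq G] (A : Hs G →L[ℂ] Hs G) (hA : IsSelfAdjoint A) (x : G) (n : ℕ)
    (K : Set ℂ) (hK : IsClosed K) (c : G → ℂ) :
    IsClosed {q : (G → ℝ) × ℝ | ∃ φ : Hs G, ‖φ‖ ≤ n ∧ (φ : G → ℂ) x ∈ K ∧
      ∀ u, (A φ : G → ℂ) u + ((q.1 u : ℂ) - q.2) * (φ : G → ℂ) u = c u} := by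
  let F : Set (((G → ℝ) × ℝ) × WeakDual ℂ (Hs G)) :=
    {q | (starRingEnd ℂ) (q.2 (lp.single 2 x 1)) ∈ K} ∩ ⋂ u,
      {q | (starRingEnd ℂ) (q.2 (A (lp.single 2 u 1))) + ((q.1.1 u : ℂ) - q.1.2) *
        (starRingEnd ℂ) (q.2 (lp.single 2 u 1)) = c u}
  have hev : ∀ v : Hs G, Continuous fun q : ((G → ℝ) × ℝ) × WeakDual ℂ (Hs G) =>
      (starRingEnd ℂ) (q.2 v) := fun v =>
    Complex.continuous_conj.comp ((WeakDual.eval_continuous v).comp continuous_snd)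
  have hF : IsClosed F := by
    refine (hK.preimage (hev _)).inter (isClosed_iInter fun u => ?_)
    refine isClosed_eq ((hev _).add (Continuous.mul ?_ (hev _))) continuous_const
    fun_prop
  convert closed_proj hF (WeakDual.isCompact_closedBall (𝕜 := ℂ) (E := Hs G) 0 n) using 1
  ext q
  have c1 : ∀ (φ : Hs G) u, (starRingEnd ℂ) (inner ℂ φ (lp.single 2 u (1:ℂ))) = (φ : G → ℂ) u := by
    intro φ u
    rw [lp.inner_single_right]; simp
  have c2 : ∀ (φ : Hs G) u, (starRingEnd ℂ) (inner ℂ φ (A (lp.single 2 u (1:ℂ))))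
      = (A φ : G → ℂ) u := by
    intro φ u
    have : inner ℂ φ (A (lp.single 2 u (1:ℂ))) = inner ℂ (A φ) (lp.single 2 u (1:ℂ)) :=
      (hA.isSymmetric φ _).symm
    rw [this, c1]
  constructor
  · rintro ⟨φ, h1, h2, h3⟩
    refine ⟨StrongDual.toWeakDual (InnerProductSpace.toDual ℂ (Hs G) φ), ?_, ?_, ?_⟩
    · simpa using h1
    · simpa [c1] using h2
    · rw [Set.mem_iInter]
      intro u
      simpa [c1, c2] using h3 u
  · rintro ⟨L, h1, h2, h3⟩
    obtain ⟨φ, hφ⟩ := (InnerProductSpace.toDual ℂ (Hs G)).surjective (WeakDual.toStrongDual L)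
    have hL : ∀ v, L v = inner ℂ φ v := fun v => by
      have := congrArg (fun f => f v) hφ
      simpa using this.symm
    refine ⟨φ, ?_, ?_, ?_⟩
    · rw [← (InnerProductSpace.toDual ℂ (Hs G)).norm_map, hφ]; simpa using h1
    · have := h2
      simpa [hL, c1] using this
    · intro u
      have := Set.mem_iInter.1 h3 u
      simpa [hL, c1, c2] using this

lemma closed_sol [DecidableEq G] (A : Hs G →L[ℂ] Hs G) (hA : IsSelfAdjoint A) (x : G) (n : ℕ) :
    IsClosed {q : (G → ℝ) × ℝ | Sol A x n q.1 q.2} := by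
  simpa [Sol] using closed_aux A hA x n Set.univ isClosed_univ (fun u => if u = x then 1 else 0)

lemma closed_eig [DecidableEq G] (A : Hs G →L[ℂ] Hs G) (hA : IsSelfAdjoint A) (x : G) (n : ℕ) :
    IsClosed {q : (G → ℝ) × ℝ | Eig A x n q.1 q.2} := by
  simpa [Eig] using closed_aux A hA x n {1} isClosed_singleton (fun u => 0)

lemma eig_finite [DecidableEq G] (A : Hs G →L[ℂ] Hs G) (hA : IsSelfAdjoint A) (x : G) (n : ℕ)
    (p : G → ℝ) : {E : ℝ | Eig A x n p E}.Finite := by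
  by_contra hinf
  have hinf : Infinite {E : ℝ | Eig A x n p E} := Set.infinite_coe_iff.2 hinf
  choose φ h1 h2 h3 using fun E : {E : ℝ | Eig A x n p E} => E.2
  have hpos : ∀ E, 0 < ‖φ E‖ := by
    intro E
    rw [norm_pos_iff]
    intro h0
    have := h2 E
    rw [h0] at this
    simp at this
  have horth : Orthonormal ℂ (fun E => ((‖φ E‖ : ℂ)⁻¹) • φ E) := by
    refine ⟨fun E => ?_, fun E E' hne => ?_⟩
    · rw [norm_smul]
      have := hpos E
      simp only [norm_inv, Complex.norm_real, norm_norm]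
      field_simp
    · have hg := green A hA x p p (fun _ _ => rfl) E' E (φ E') (φ E) (h3 E') (h3 E) (h2 E') (h2 E)
      rw [sub_self, mul_eq_zero] at hg
      have : inner ℂ (φ E) (φ E') = 0 := by
        rcases hg with hg | hg
        · exfalso
          apply hne
          rw [sub_eq_zero] at hg
          exact (Subtype.ext (Complex.ofReal_injective hg)).symm
        · exact hg
      simp [inner_smul_left, inner_smul_right, this]
  obtain ⟨t, ht⟩ := Infinite.exists_subset_card_eq {E : ℝ | Eig A x n p E} (n ^ 2 + 1)
  have hb := horth.sum_inner_products_le (lp.single 2 x (1:ℂ)) (s := t)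
  have hn : ∀ E, (1 : ℝ) ≤ (n : ℝ) ^ 2 *
      ‖inner ℂ (((‖φ E‖ : ℂ)⁻¹) • φ E) (lp.single 2 x (1:ℂ) : Hs G)‖ ^ 2 := by
    intro E
    rw [inner_smul_left, lp.inner_single_right, h2]
    simp
    rw [← div_eq_mul_inv, one_le_div (by have := hpos E; positivity)]
    have := h1 E
    gcongr
  have hnorm : ‖(lp.single 2 x (1:ℂ) : Hs G)‖ = 1 := by
    rw [lp.norm_single (by norm_num)]; simp
  rw [hnorm] at hb
  have h4 : (t.card : ℝ) ≤ ∑ E ∈ t, (n : ℝ) ^ 2 *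
      ‖inner ℂ (((‖φ E‖ : ℂ)⁻¹) • φ E) (lp.single 2 x (1:ℂ) : Hs G)‖ ^ 2 := by
    simpa using Finset.sum_le_sum (fun E (_ : E ∈ t) => hn E)
  rw [← Finset.mul_sum, ht] at h4
  push_cast at h4
  nlinarith [sq_nonneg (n : ℝ)]

/-- Smallest eigenvalue in `[q, r]`. -/
noncomputable def low (A : Hs G →L[ℂ] Hs G) (x : G) (n : ℕ) (q r : ℝ) (p : G → ℝ) : ℝ :=
  sInf {E | E ∈ Set.Icc q r ∧ Eig A x n p E}

lemma meas_ex [Countable G] [DecidableEq G] (A : Hs G →L[ℂ] Hs G) (hA : IsSelfAdjoint A)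
    (x : G) (n : ℕ) (q r : ℝ) : MeasurableSet {p : G → ℝ | ∃ E ∈ Set.Icc q r, Eig A x n p E} :=
  (closed_proj (closed_eig A hA x n) (isCompact_Icc (a := q) (b := r))).measurableSet

lemma low_mem [DecidableEq G] (A : Hs G →L[ℂ] Hs G) (hA : IsSelfAdjoint A) (x : G) (n : ℕ)
    (q r : ℝ) (p : G → ℝ) (h : ∃ E ∈ Set.Icc q r, Eig A x n p E) :
    low A x n q r p ∈ Set.Icc q r ∧ Eig A x n p (low A x n q r p) := by
  have hf : {E | E ∈ Set.Icc q r ∧ Eig A x n p E}.Finite :=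
    (eig_finite A hA x n p).subset fun E hE => hE.2
  exact hf.isCompact.sInf_mem h

lemma low_le [DecidableEq G] (A : Hs G →L[ℂ] Hs G) (x : G) (n : ℕ)
    (q r : ℝ) (p : G → ℝ) (E : ℝ) (h : E ∈ Set.Icc q r) (h' : Eig A x n p E) :
    low A x n q r p ≤ E :=
  csInf_le ⟨q, fun _ hy => hy.1.1⟩ ⟨h, h'⟩

lemma meas_low [Countable G] [DecidableEq G] (A : Hs G →L[ℂ] Hs G) (hA : IsSelfAdjoint A)
    (x : G) (n : ℕ) (q r : ℝ) : Measurable (low A x n q r) := by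
  refine measurable_of_Iic fun c => ?_
  have : low A x n q r ⁻¹' Set.Iic c =
      {p : G → ℝ | ∃ E ∈ Set.Icc q (min r c), Eig A x n p E} ∪
      ({p : G → ℝ | ∃ E ∈ Set.Icc q r, Eig A x n p E}ᶜ ∩ {p | 0 ≤ c}) := by
    ext p
    by_cases h : ∃ E ∈ Set.Icc q r, Eig A x n p E
    · have hm := low_mem A hA x n q r p h
      constructor
      · intro hc
        exact Or.inl ⟨_, ⟨hm.1.1, le_min hm.1.2 hc⟩, hm.2⟩
      · rintro (⟨E, hE, hE'⟩ | h')
        · exact (low_le A x n q r p E ⟨hE.1, hE.2.trans (min_le_left _ _)⟩ hE').trans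
            (hE.2.trans (min_le_right _ _))
        · exact absurd h h'.1
    · have h0 : low A x n q r p = 0 := by
        have : {E | E ∈ Set.Icc q r ∧ Eig A x n p E} = ∅ := by
          ext E
          simp only [Set.mem_ofPred_eq, Set.mem_empty_iff_false, iff_false]
          intro hE; exact h ⟨E, hE⟩
        rw [low, this, Real.sInf_empty]
      simp only [Set.mem_preimage, Set.mem_Iic, h0, Set.mem_union, Set.mem_inter_iff,
        Set.mem_compl_iff, Set.mem_ofPred_eq]
      constructor
      · intro hc; exact Or.inr ⟨h, hc⟩
      · rintro (⟨E, hE, hE'⟩ | h')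
        · exact absurd ⟨E, ⟨hE.1, hE.2.trans (min_le_left _ _)⟩, hE'⟩ h
        · exact h'.2
  rw [this]
  exact (meas_ex A hA x n _ _).union ((meas_ex A hA x n _ _).compl.inter (MeasurableSet.const _))

lemma exists_low [DecidableEq G] (A : Hs G →L[ℂ] Hs G) (hA : IsSelfAdjoint A) (x : G) (n : ℕ)
    (p : G → ℝ) (E : ℝ) (h : Eig A x n p E) :
    ∃ q r : ℚ, E ∈ Set.Icc (q : ℝ) r ∧ low A x n q r p = E := by
  have hf : ({E : ℝ | Eig A x n p E} \ {E}).Finite := (eig_finite A hA x n p).sdiff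
  have ho : ({E : ℝ | Eig A x n p E} \ {E})ᶜ ∈ 𝓝 E :=
    hf.isClosed.isOpen_compl.mem_nhds (by simp)
  obtain ⟨ε, hε, hball⟩ := Metric.mem_nhds_iff.1 ho
  obtain ⟨q, hq1, hq2⟩ := exists_rat_btwn (show E - ε < E by linarith)
  obtain ⟨r, hr1, hr2⟩ := exists_rat_btwn (show E < E + 1 by linarith)
  have hE : E ∈ Set.Icc (q : ℝ) r := ⟨hq2.le, hr1.le⟩
  refine ⟨q, r, hE, ?_⟩
  have hm := low_mem A hA x n q r p ⟨E, hE, h⟩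
  have hle := low_le A x n q r p E hE h
  by_contra hne
  have : low A x n q r p ∈ Metric.ball E ε := by
    rw [Metric.mem_ball, Real.dist_eq, abs_lt]
    constructor <;> linarith [hm.1.1]
  exact hball this ⟨hm.2, hne⟩

/-- Glue the value at `x` with the remaining values. -/
def glue [DecidableEq G] (x : G) (q : ({y : G // y ≠ x} → ℝ) × ℝ) : G → ℝ :=
  fun y => if h : y = x then q.2 else q.1 ⟨y, h⟩

lemma meas_glue [DecidableEq G] (x : G) : Measurable (glue x) := by
  refine measurable_pi_lambda _ fun y => ?_
  unfold glue
  by_cases h : y = x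
  · simp only [h, dite_true]; exact measurable_snd
  · simp only [h, dite_false]; exact (measurable_pi_apply _).comp measurable_fst

/-- An eigenfunction gives solutions for every other value of the potential at `x`. -/
lemma sol_of_eig [DecidableEq G] (A : Hs G →L[ℂ] Hs G) (x : G) (n : ℕ)
    (b : {y : G // y ≠ x} → ℝ) (v v' : ℝ) (hv : v ≠ v') (E : ℝ) (h : Eig A x n (glue x (b, v)) E) :
    ∃ m, Sol A x m (glue x (b, v')) E := by
  obtain ⟨φ, h1, h2, h3⟩ := h
  have hc : ((v' : ℂ) - v) ≠ 0 := by
    rw [sub_ne_zero]; exact_mod_cast hv.symm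
  set ψ : Hs G := ((v' : ℂ) - v)⁻¹ • φ with hψ
  obtain ⟨m, hm⟩ := exists_nat_ge ‖ψ‖
  refine ⟨m, ψ, hm, fun u => ?_⟩
  have e1 : (A ψ : G → ℂ) u = ((v' : ℂ) - v)⁻¹ * (A φ : G → ℂ) u := by rw [hψ, map_smul]; rfl
  have e2 : (ψ : G → ℂ) u = ((v' : ℂ) - v)⁻¹ * (φ : G → ℂ) u := rfl
  have h3u := h3 u
  rw [e1, e2]
  by_cases hu : u = x
  · subst hu
    simp only [glue, dite_true, if_true, h2] at h3u ⊢
    field_simp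
    linear_combination h3u
  · simp only [glue, hu, dite_false, if_false] at h3u ⊢
    linear_combination ((v' : ℂ) - v)⁻¹ * h3u

/-- Values of the potential at `x` producing an eigenvalue in a null set form a null set. -/
lemma null_v [DecidableEq G] (A : Hs G →L[ℂ] Hs G) (hA : IsSelfAdjoint A) (x : G) (n : ℕ)
    (b : {y : G // y ≠ x} → ℝ) (N : Set ℝ) (hN : volume N = 0) :
    volume {v : ℝ | ∃ E ∈ N, Eig A x n (glue x (b, v)) E} = 0 := by
  classical
  let S : Set ℝ := {E | E ∈ N ∧ ∃ v, Eig A x n (glue x (b, v)) E}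
  have key : ∀ E v E' v', Eig A x n (glue x (b, v)) E → Eig A x n (glue x (b, v')) E' →
      |v - v'| ≤ (n : ℝ) ^ 2 * |E - E'| := by
    rintro E v E' v' ⟨φ, h1, h2, h3⟩ ⟨φ', h1', h2', h3'⟩
    have hg := green A hA x (glue x (b, v)) (glue x (b, v')) (fun u hu => by simp [glue, hu])
      E E' φ φ' h3 h3' h2 h2'
    simp only [glue, dite_true] at hg
    have hh := congrArg norm hg
    rw [norm_mul, ← Complex.ofReal_sub, ← Complex.ofReal_sub, Complex.norm_real,
      Complex.norm_real, Real.norm_eq_abs, Real.norm_eq_abs] at hh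
    rw [← hh, mul_comm]
    have : ‖(inner ℂ φ' φ : ℂ)‖ ≤ (n : ℝ) ^ 2 := by
      refine (norm_inner_le_norm _ _).trans ?_
      rw [sq]
      gcongr
    gcongr
  let f : ℝ → ℝ := fun E => if h : ∃ v, Eig A x n (glue x (b, v)) E then h.choose else 0
  have hf : ∀ E v, Eig A x n (glue x (b, v)) E → f E = v := by
    intro E v hv
    have hex : ∃ v, Eig A x n (glue x (b, v)) E := ⟨v, hv⟩
    have e : f E = hex.choose := dif_pos hex
    have := key E _ E v hex.choose_spec hv
    rw [sub_self, abs_zero, mul_zero] at this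
    rw [e]
    exact sub_eq_zero.1 (abs_nonpos_iff.1 this)
  have hlip : LipschitzOnWith ((n : NNReal) ^ 2) f S := by
    refine LipschitzOnWith.of_dist_le_mul ?_
    rintro E ⟨_, v, hv⟩ E' ⟨_, v', hv'⟩
    rw [hf E v hv, hf E' v' hv', Real.dist_eq, Real.dist_eq]
    simpa using key E v E' v' hv hv'
  have hS : volume S = 0 := measure_mono_null (fun E hE => hE.1) hN
  have himg : volume (f '' S) = 0 := by
    have h := hlip.hausdorffMeasure_image_le (d := 1) zero_le_one
    rw [hausdorffMeasure_real, hS, mul_zero] at h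
    exact le_antisymm h zero_le
  refine measure_mono_null ?_ himg
  rintro v ⟨E, hE, hv⟩
  exact ⟨E, ⟨hE, v, hv⟩, hf E v hv⟩

end SW

/-- Simon–Wolff criterion: for `H(ω) = A + V(ω)` on `ℓ²(G)` with a
jointly measurable, uniformly bounded random potential whose single-site regular conditional
distributions are almost surely absolutely continuous w.r.t. Lebesgue measure, if for every
`x`, Lebesgue-almost every `E ∈ I` and almost every `ω` the quantity
`γ_x(E;ω) = lim_{η↓0} ‖(H(ω)-(E+iη))⁻¹δ_x‖²` (the supremum over `η > 0`) is infinite, then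
almost surely `H(ω)` has no eigenvalues in `I`. -/
theorem stmt17 {G : Type*} [Countable G] [DecidableEq G]
    {Ω : Type*} [MeasurableSpace Ω] (μ : Measure Ω) [IsProbabilityMeasure μ]
    (V : Ω → G → ℝ) (hVmeas : Measurable V)
    (C : ℝ) (hVbdd : ∀ ω u, |V ω u| ≤ C)
    (hac : ∀ x : G,
      ∀ᵐ b ∂(μ.map (fun ω (y : {y : G // y ≠ x}) => V ω (y : G))),
        condDistrib (fun ω => V ω x) (fun ω (y : {y : G // y ≠ x}) => V ω (y : G)) μ b
          ≪ (volume : Measure ℝ))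
    (A : lp (fun _ : G => ℂ) 2 →L[ℂ] lp (fun _ : G => ℂ) 2) (hA : IsSelfAdjoint A)
    (H : Ω → (lp (fun _ : G => ℂ) 2 →L[ℂ] lp (fun _ : G => ℂ) 2))
    (hH : ∀ ω (ψ : lp (fun _ : G => ℂ) 2) (u : G),
      (H ω ψ : ∀ _ : G, ℂ) u = (A ψ : ∀ _ : G, ℂ) u + (V ω u : ℂ) * (ψ : ∀ _ : G, ℂ) u)
    (I : Set ℝ) (hI : MeasurableSet I)
    (hγ : ∀ x : G, ∀ᵐ (E : ℝ) ∂((volume : Measure ℝ).restrict I), ∀ᵐ ω ∂μ,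
      (⨆ η : {η : ℝ // 0 < η}, ENNReal.ofReal
        (‖Ring.inverse (H ω - ((E : ℂ) + (η : ℝ) * Complex.I) • 1)
          (lp.single 2 x (1:ℂ))‖ ^ 2)) = ⊤) :
    ∀ᵐ ω ∂μ, ∀ E ∈ I, ∀ φ : lp (fun _ : G => ℂ) 2,
      H ω φ = (E : ℂ) • φ → φ = 0 := by
  classical
  have hmain : ∀ x : G, ∀ᵐ ω ∂μ, ∀ n : ℕ, ∀ q r : ℚ,
      ¬ ((∃ E ∈ Set.Icc (q : ℝ) r, SW.Eig A x n (V ω) E) ∧ SW.low A x n q r (V ω) ∈ I) := by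
    intro x
    set X : Ω → ({y : G // y ≠ x} → ℝ) := fun ω y => V ω (y : G) with hX
    set Y : Ω → ℝ := fun ω => V ω x with hY
    have hXm : Measurable X := measurable_pi_lambda _ fun y => (measurable_pi_apply _).comp hVmeas
    have hYm : Measurable Y := (measurable_pi_apply x).comp hVmeas
    have hglue : ∀ ω, SW.glue x (X ω, Y ω) = V ω := by
      intro ω
      ext y
      by_cases h : y = x
      · subst h; simp [SW.glue, hY]
      · simp [SW.glue, hX, h]
    -- the set where no solution exists
    have hNs : MeasurableSet {q : (G → ℝ) × ℝ | ∀ m, ¬ SW.Sol A x m q.1 q.2} := by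
      have : {q : (G → ℝ) × ℝ | ∀ m, ¬ SW.Sol A x m q.1 q.2}
          = ⋂ m, {q : (G → ℝ) × ℝ | SW.Sol A x m q.1 q.2}ᶜ := by
        ext q; simp
      rw [this]
      exact MeasurableSet.iInter fun m => (SW.closed_sol A hA x m).measurableSet.compl
    have h1 : ∀ᵐ (E : ℝ) ∂((volume : Measure ℝ).restrict I), ∀ᵐ ω ∂μ,
        ∀ m, ¬ SW.Sol A x m (V ω) E := by
      filter_upwards [hγ x] with E hE
      filter_upwards [hE] with ω hω m hs
      exact SW.sup_ne_top A hA x (V ω) (H ω) (hH ω) E m hs hω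
    have h2 : ∀ᵐ ω ∂μ, ∀ᵐ (E : ℝ) ∂((volume : Measure ℝ).restrict I),
        ∀ m, ¬ SW.Sol A x m (V ω) E := by
      refine (Measure.ae_ae_comm (p := fun (E : ℝ) ω => ∀ m, ¬ SW.Sol A x m (V ω) E) ?_).1 h1
      exact hNs.preimage ((hVmeas.comp measurable_snd).prodMk measurable_fst)
    have hlaw : μ.map X ⊗ₘ condDistrib Y X μ = μ.map fun ω => (X ω, Y ω) :=
      compProd_map_condDistrib (X := X) (Y := Y) (μ := μ) hYm.aemeasurable
    have hXY : Measurable fun ω => (X ω, Y ω) := hXm.prodMk hYm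
    have hPm : IsProbabilityMeasure (μ.map X) := Measure.isProbabilityMeasure_map hXm.aemeasurable
    have hmeas3 : MeasurableSet {c : ({y : G // y ≠ x} → ℝ) × ℝ |
        ∀ᵐ (E : ℝ) ∂((volume : Measure ℝ).restrict I), ∀ m, ¬ SW.Sol A x m (SW.glue x c) E} := by
      have hs := (hNs.preimage (((SW.meas_glue x).comp measurable_fst).prodMk
        (measurable_snd (α := ({y : G // y ≠ x} → ℝ) × ℝ) (β := ℝ)))).compl
      have := measurable_measure_prodMk_left (ν := (volume : Measure ℝ).restrict I) hs
      exact this (measurableSet_singleton 0)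
    have h3 : ∀ᵐ b ∂(μ.map X), ∀ᵐ v ∂(condDistrib Y X μ b),
        ∀ᵐ (E : ℝ) ∂((volume : Measure ℝ).restrict I),
          ∀ m, ¬ SW.Sol A x m (SW.glue x (b, v)) E := by
      refine Measure.ae_ae_of_ae_compProd (p := fun c =>
        ∀ᵐ (E : ℝ) ∂((volume : Measure ℝ).restrict I), ∀ m, ¬ SW.Sol A x m (SW.glue x c) E) ?_
      rw [hlaw, ae_map_iff hXY.aemeasurable hmeas3]
      filter_upwards [h2] with ω hω
      rw [hglue]
      exact hω
    rw [ae_all_iff]; intro n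
    rw [ae_all_iff]; intro q
    rw [ae_all_iff]; intro r
    have hT : MeasurableSet {p : G → ℝ | ¬ ((∃ E ∈ Set.Icc (q : ℝ) r, SW.Eig A x n p E) ∧
        SW.low A x n q r p ∈ I)} :=
      ((SW.meas_ex A hA x n q r).inter (SW.meas_low A hA x n q r hI)).compl
    have h4 : ∀ᵐ c ∂(μ.map X ⊗ₘ condDistrib Y X μ),
        ¬ ((∃ E ∈ Set.Icc (q : ℝ) r, SW.Eig A x n (SW.glue x c) E) ∧
        SW.low A x n q r (SW.glue x c) ∈ I) := by
      refine (Measure.ae_compProd_iff (hT.preimage (SW.meas_glue x))).2 ?_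
      filter_upwards [h3, hac x] with b hb hbac
      -- two different good values
      obtain ⟨v₁, hv₁⟩ := hb.exists
      have hb2 : ∀ᵐ v ∂(condDistrib Y X μ b), v ≠ v₁ :=
        measure_eq_zero_iff_ae_notMem.1 (hbac (measure_singleton v₁))
      obtain ⟨v₂, hv₂, hne⟩ := (hb.and hb2).exists
      have hN : volume {E | E ∈ I ∧ ¬ ((∀ m, ¬ SW.Sol A x m (SW.glue x (b, v₁)) E) ∧
          ∀ m, ¬ SW.Sol A x m (SW.glue x (b, v₂)) E)} = 0 := by
        have := (ae_restrict_iff' hI).1 (hv₁.and hv₂)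
        rw [ae_iff] at this
        simpa only [Classical.not_imp] using this
      have hnull := SW.null_v A hA x n b _ hN
      have hae : ∀ᵐ v ∂(condDistrib Y X μ b), ¬ (∃ E ∈ {E | E ∈ I ∧
          ¬ ((∀ m, ¬ SW.Sol A x m (SW.glue x (b, v₁)) E) ∧
          ∀ m, ¬ SW.Sol A x m (SW.glue x (b, v₂)) E)}, SW.Eig A x n (SW.glue x (b, v)) E) :=
        measure_eq_zero_iff_ae_notMem.1 (hbac hnull)
      filter_upwards [hae] with v hv hbad
      have hm := SW.low_mem A hA x n q r _ hbad.1
      refine hv ⟨_, ⟨hbad.2, ?_⟩, hm.2⟩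
      rintro ⟨g1, g2⟩
      by_cases hvv : v = v₁
      · obtain ⟨m, hs⟩ := SW.sol_of_eig A x n b v v₂ (by rw [hvv]; exact hne.symm) _ hm.2
        exact g2 m hs
      · obtain ⟨m, hs⟩ := SW.sol_of_eig A x n b v v₁ hvv _ hm.2
        exact g1 m hs
    rw [hlaw] at h4
    have h5 := ae_of_ae_map hXY.aemeasurable h4
    filter_upwards [h5] with ω hω
    rw [hglue] at hω
    exact hω
  filter_upwards [ae_all_iff.2 hmain] with ω hω E hE φ hφ
  by_contra hne
  have hx : ∃ x, (φ : G → ℂ) x ≠ 0 := by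
    by_contra hall
    push Not at hall
    exact hne (lp.ext (funext hall))
  obtain ⟨x, hx⟩ := hx
  obtain ⟨n, hn⟩ := exists_nat_ge ‖((φ : G → ℂ) x)⁻¹ • φ‖
  have heig : SW.Eig A x n (V ω) E := by
    refine ⟨((φ : G → ℂ) x)⁻¹ • φ, hn, ?_, fun u => ?_⟩
    · exact inv_mul_cancel₀ hx
    · have e0 := congrArg (fun f : SW.Hs G => (f : G → ℂ) u) hφ
      have e3 : (((E : ℂ) • φ : SW.Hs G) : G → ℂ) u = E * (φ : G → ℂ) u := rfl
      simp only [hH, e3] at e0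
      have e1 : (A (((φ : G → ℂ) x)⁻¹ • φ) : G → ℂ) u
          = ((φ : G → ℂ) x)⁻¹ * (A φ : G → ℂ) u := by rw [map_smul]; rfl
      have e2 : ((((φ : G → ℂ) x)⁻¹ • φ : SW.Hs G) : G → ℂ) u
          = ((φ : G → ℂ) x)⁻¹ * (φ : G → ℂ) u := rfl
      rw [e1, e2]
      linear_combination ((φ : G → ℂ) x)⁻¹ * e0
  obtain ⟨q, r, hm, hlow⟩ := SW.exists_low A hA x n (V ω) E heig
  exact hω x n q r ⟨⟨E, hm, heig⟩, by rw [hlow]; exact hE⟩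
end
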